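/- arXiv:2406.18446 — 2 statements merged into one kernel-verified Lean document; each statement's English description precedes it below -/
import Mathlib

section
/- Let α, β > 0 and σ, γ ∈ ℝ, and define the weights v(z) = (1−|z|²)^γ exp(−α/(1−|z|²)^β) and ω(z) = (1−|z|²)^{2σ} exp(−2α/(1−|z|²)^β) on the unit disc. Then the Bergman projection P_ω is bounded from L^∞_v to H^∞_v: there exists C > 0 such that every measurable f with sup_{z∈𝔻} |f(z)| v(z) ≤ 1 satisfies that P_ω f is a well-defined analytic function on 𝔻 with sup_{z∈𝔻} |P_ω f(z)| v(z) ≤ C. -/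
open MeasureTheory Set Complex
open scoped ENNReal

noncomputable section

/-- The open unit disc in the complex plane. -/
def unitDisc : Set ℂ := Metric.ball 0 1

/-- Tail integral `ω̂(r) = ∫_r^1 ω(s) ds`. -/
def tl (ω : ℝ → ℝ) (r : ℝ) : ℝ := ∫ s in r..1, ω s

/-- Moment `ω_x = ∫_0^1 s^x ω(s) ds` (real power in the exponent). -/
def mom (ω : ℝ → ℝ) (x : ℝ) : ℝ := ∫ s in (0:ℝ)..1, s ^ x * ω s

/-- `ω` is a radial weight: nonnegative and integrable on `[0,1)`, with positive
tail integrals. -/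
def IsRadialWeight (ω : ℝ → ℝ) : Prop :=
  (∀ s ∈ Ico (0:ℝ) 1, 0 ≤ ω s) ∧ IntegrableOn ω (Ico (0:ℝ) 1) ∧
    ∀ r ∈ Ico (0:ℝ) 1, 0 < tl ω r

/-- The upper doubling class `D̂`: `sup_{0≤r<1} ω̂(r)/ω̂((1+r)/2) < ∞`. -/
def Dhat (ω : ℝ → ℝ) : Prop :=
  ∃ C : ℝ, ∀ r ∈ Ico (0:ℝ) 1, tl ω r ≤ C * tl ω ((1 + r) / 2)

/-- The class `Ď`: there are `K > 1`, `C > 1` with `ω̂(r) ≥ C ω̂(1 - (1-r)/K)`. -/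
def Dcheck (ω : ℝ → ℝ) : Prop :=
  ∃ K C : ℝ, 1 < K ∧ 1 < C ∧ ∀ r ∈ Ico (0:ℝ) 1, C * tl ω (1 - (1 - r) / K) ≤ tl ω r

/-- The class `D = D̂ ∩ Ď`. -/
def DD (ω : ℝ → ℝ) : Prop := Dhat ω ∧ Dcheck ω

/-- The Bergman reproducing kernel `B^ω_z(ζ) = Σ_n (conj z · ζ)^n / (2 ω_{2n+1})`. -/
def bKer (ω : ℝ → ℝ) (z ζ : ℂ) : ℂ :=
  ∑' n : ℕ, (starRingEnd ℂ z * ζ) ^ n / ((2 * mom ω (2 * (n : ℝ) + 1) : ℝ) : ℂ)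

/-- The integrand of the Bergman projection. -/
def bInt (ω : ℝ → ℝ) (f : ℂ → ℂ) (z ζ : ℂ) : ℂ :=
  f ζ * starRingEnd ℂ (bKer ω z ζ) * ((ω ‖ζ‖ : ℝ) : ℂ)

/-- The Bergman projection `P_ω f(z) = ∫_𝔻 f(ζ) conj(B^ω_z(ζ)) ω(ζ) dA(ζ)`,
where `dA` is normalized area measure `dx dy / π`. -/
def bProj (ω : ℝ → ℝ) (f : ℂ → ℂ) (z : ℂ) : ℂ :=
  (Real.pi : ℂ)⁻¹ * ∫ ζ in unitDisc, bInt ω f z ζ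

/-- The weighted sup-norm `ess sup_{z ∈ 𝔻} |f(z)| v(|z|)`, valued in `ℝ≥0∞`. -/
def wSup (v : ℝ → ℝ) (f : ℂ → ℂ) : ℝ≥0∞ :=
  essSup (fun z => ENNReal.ofReal (‖f z‖ * v ‖z‖)) (volume.restrict unitDisc)

/-- `P_ω : L^∞_v → H^∞_v` is bounded: there is `C > 0` so that for every
`f ∈ L^∞_v` the defining integral converges absolutely at every point of `𝔻`,
`P_ω f` is analytic on `𝔻`, and `‖P_ω f‖_{L^∞_v} ≤ C ‖f‖_{L^∞_v}`. -/
def ProjBddH (ω v : ℝ → ℝ) : Prop :=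
  ∃ C : ℝ, 0 < C ∧ ∀ f : ℂ → ℂ,
    AEStronglyMeasurable f (volume.restrict unitDisc) → wSup v f < ⊤ →
    (∀ z ∈ unitDisc, IntegrableOn (bInt ω f z) unitDisc) ∧
    DifferentiableOn ℂ (bProj ω f) unitDisc ∧
    wSup v (bProj ω f) ≤ ENNReal.ofReal C * wSup v f

/-- `P_ω : L^∞_v → B^∞_v` is bounded: there is `C > 0` so that for every
`f ∈ L^∞_v` the defining integral converges absolutely at every point of `𝔻`,
`P_ω f` is analytic on `𝔻`, and `‖P_ω f‖_{B^∞_v} ≤ C ‖f‖_{L^∞_v}`. -/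
def ProjBddB (ω v : ℝ → ℝ) : Prop :=
  ∃ C : ℝ, 0 < C ∧ ∀ f : ℂ → ℂ,
    AEStronglyMeasurable f (volume.restrict unitDisc) → wSup v f < ⊤ →
    (∀ z ∈ unitDisc, IntegrableOn (bInt ω f z) unitDisc) ∧
    DifferentiableOn ℂ (bProj ω f) unitDisc ∧
    ∀ z ∈ unitDisc,
      ENNReal.ofReal ((1 - ‖z‖) * v ‖z‖ * ‖deriv (bProj ω f) z‖) ≤
        ENNReal.ofReal C * wSup v f

/-- The moment condition `sup_{x ≥ 0} (ν_x / ω_{2x}) (ω/ν̂)_x < ∞`. -/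
def MomCond (ω ν : ℝ → ℝ) : Prop :=
  ∃ C : ℝ, ∀ x : ℝ, 0 ≤ x →
    mom ν x / mom ω (2 * x) * mom (fun s => ω s / tl ν s) x ≤ C

/-- The tail condition `sup_{0 ≤ r < 1} (ν̂(r)/ω̂(r)) ∫_r^1 ω(s)/ν̂(s) ds < ∞`. -/
def TailCond (ω ν : ℝ → ℝ) : Prop :=
  ∃ C : ℝ, ∀ r ∈ Ico (0:ℝ) 1, tl ν r / tl ω r * tl (fun s => ω s / tl ν s) r ≤ C

/-- the quantity `r + 1/r` -/
def RR (r : ℝ) : ℝ := r + r⁻¹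

/-- the convex defect function -/
def kk (β r : ℝ) : ℝ := r ^ (-β) - 1 + β * (r - 1)

lemma RR_ge_one {r : ℝ} (hr : 0 < r) : 1 ≤ RR r := by
  unfold RR
  have h : 0 < r⁻¹ := inv_pos.mpr hr
  have h2 : r * r⁻¹ = 1 := mul_inv_cancel₀ hr.ne'
  nlinarith [sq_nonneg (r - r⁻¹), sq_nonneg (r - 1)]

lemma rpow_le_RR {r a : ℝ} (hr : 0 < r) (M : ℕ) (hM : |a| ≤ M) : r ^ a ≤ RR r ^ M := by
  have h1 := RR_ge_one hr
  have hi : 0 < r⁻¹ := inv_pos.mpr hr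
  have h2 : r ^ a ≤ RR r ^ |a| := by
    rcases le_total 0 a with h | h
    · rw [abs_of_nonneg h]
      exact Real.rpow_le_rpow hr.le (by unfold RR; linarith) h
    · rw [abs_of_nonpos h]
      have : r ^ a = (r⁻¹) ^ (-a) := by
        rw [Real.inv_rpow hr.le, Real.rpow_neg hr.le, inv_inv]
      rw [this]
      exact Real.rpow_le_rpow hi.le (by unfold RR; linarith) (by linarith)
  calc r ^ a ≤ RR r ^ |a| := h2
    _ ≤ RR r ^ (M : ℝ) := Real.rpow_le_rpow_of_exponent_le h1 hM
    _ = RR r ^ M := Real.rpow_natCast _ _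

lemma kk_ge {β r : ℝ} (hβ : 0 < β) (hr : 0 < r) :
    β * (r - 1) ^ 2 / (2 * (1 + r)) ≤ kk β r := by
  have h1 : 1 - β * Real.log r ≤ r ^ (-β) := by
    rw [Real.rpow_def_of_pos hr]
    have := Real.add_one_le_exp (Real.log r * -β)
    linarith
  have hs := Real.sqrt_pos.mpr hr
  have hss := Real.sq_sqrt hr.le
  set s := Real.sqrt r with hsdef
  have h2 : Real.log r ≤ 2 * (s - 1) := by
    rw [← hss, Real.log_pow]
    have := Real.log_le_sub_one_of_pos hs
    push_cast; linarith
  have h3 : (r - 1) ^ 2 / (2 * (1 + r)) ≤ (s - 1) ^ 2 := by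
    rw [div_le_iff₀ (by linarith)]
    rw [← hss]
    nlinarith [sq_nonneg ((s-1)*(s-1)), sq_nonneg (s-1)]
  have h4 : β * (r - 1) ^ 2 / (2 * (1 + r)) ≤ β * (s - 1) ^ 2 := by
    rw [mul_div_assoc]; exact mul_le_mul_of_nonneg_left h3 hβ.le
  unfold kk
  have h5 : β * Real.log r ≤ β * (2 * (s - 1)) := mul_le_mul_of_nonneg_left h2 hβ.le
  have : β * (s-1)^2 = β * (r - 1) - β * (2 * (s - 1)) := by rw [← hss]; ring
  linarith

lemma kk_nonneg {β r : ℝ} (hβ : 0 < β) (hr : 0 < r) : 0 ≤ kk β r :=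
  le_trans (by positivity) (kk_ge hβ hr)

lemma pow_mul_exp_bdd (N : ℕ) {b : ℝ} (hb : 0 < b) :
    ∃ C : ℝ, 0 < C ∧ ∀ s : ℝ, 0 ≤ s → s ^ N * Real.exp (-(b * s)) ≤ C := by
  refine ⟨N.factorial / b ^ N, by positivity, fun s hs => ?_⟩
  have h := Real.pow_div_factorial_le_exp (b * s) (by positivity) N
  rw [div_le_iff₀ (by positivity), mul_pow] at h
  rw [Real.exp_neg, ← div_eq_mul_inv, div_le_div_iff₀ (by positivity) (by positivity)]
  linarith

/-- powers of `δ` are absorbed by the exponential. -/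
lemma rpow_exp_bdd (a : ℝ) {b β : ℝ} (hb : 0 < b) (hβ : 0 < β) :
    ∃ C : ℝ, 0 < C ∧ ∀ δ : ℝ, 0 < δ → δ ≤ 1 → δ ^ a * Real.exp (-(b * δ ^ (-β))) ≤ C := by
  obtain ⟨C, hC, h⟩ := pow_mul_exp_bdd ⌈|a| / β⌉₊ hb
  refine ⟨C, hC, fun δ h0 h1 => ?_⟩
  refine le_trans ?_ (h (δ ^ (-β)) (by positivity))
  gcongr
  rw [← Real.rpow_natCast, ← Real.rpow_mul h0.le]
  apply Real.rpow_le_rpow_of_exponent_ge h0 h1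
  have := Nat.le_ceil (|a| / β)
  rw [div_le_iff₀ hβ] at this
  have := neg_abs_le a
  nlinarith

lemma RR_exp_bdd (M : ℕ) {b β : ℝ} (hb : 0 < b) (hβ : 0 < β) :
    ∃ C : ℝ, 0 < C ∧ ∀ r : ℝ, 0 < r → RR r ^ M * Real.exp (-(b * kk β r)) ≤ C := by
  obtain ⟨C1, hC1, h1⟩ := pow_mul_exp_bdd M (b := b * β) (by positivity)
  obtain ⟨C2, hC2, h2⟩ := rpow_exp_bdd (-(M:ℝ)) hb hβ
  refine ⟨2 ^ M * ((C1 + C2 + 1) * Real.exp (b * (1 + β))), by positivity, fun r hr => ?_⟩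
  rcases le_total 1 r with h | h
  · have hR : RR r ≤ 2 * r := by
      unfold RR; have : r⁻¹ ≤ 1 := inv_le_one_of_one_le₀ h
      linarith
    have hk : -(b * kk β r) ≤ -(b * β * r) + b * (1 + β) := by
      unfold kk
      have : 0 < r ^ (-β) := by positivity
      nlinarith
    calc RR r ^ M * Real.exp (-(b * kk β r))
        ≤ (2 * r) ^ M * Real.exp (-(b * β * r) + b * (1 + β)) := by
          have := RR_ge_one hr
          gcongr
      _ = 2 ^ M * ((r ^ M * Real.exp (-(b * β * r))) * Real.exp (b * (1 + β))) := by
          rw [mul_pow, Real.exp_add]; ring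
      _ ≤ _ := by
          have := h1 r hr.le
          gcongr; linarith
  · have hR : RR r ≤ 2 * r⁻¹ := by
      unfold RR; have : 1 ≤ r⁻¹ := (one_le_inv₀ hr).mpr h
      linarith
    have hk : -(b * kk β r) ≤ -(b * r ^ (-β)) + b * (1 + β) := by
      unfold kk
      have : 0 < b * β * r := by positivity
      nlinarith
    calc RR r ^ M * Real.exp (-(b * kk β r))
        ≤ (2 * r⁻¹) ^ M * Real.exp (-(b * r ^ (-β)) + b * (1 + β)) := by
          have := RR_ge_one hr
          gcongr
      _ = 2 ^ M * ((r ^ (-(M:ℝ)) * Real.exp (-(b * r ^ (-β)))) * Real.exp (b * (1 + β))) := by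
          have e : r ^ (-(M:ℝ)) = r⁻¹ ^ M := by rw [Real.rpow_neg hr.le, Real.rpow_natCast, inv_pow]
          rw [mul_pow, Real.exp_add, e]; ring
      _ ≤ _ := by
          have := h2 r hr h
          gcongr; linarith

lemma main_exp_bdd (M N : ℕ) {b β : ℝ} (hb : 0 < b) (hβ : 0 < β) :
    ∃ C : ℝ, 0 < C ∧ ∀ r L : ℝ, 0 < r → 1 ≤ L →
      RR r ^ M * (1 + L * (r - 1) ^ 2) ^ N * Real.exp (-(b * (L * kk β r))) ≤ C := by
  obtain ⟨C1, hC1, h1⟩ := RR_exp_bdd (M + N) (b := b / 2) (by positivity) hβ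
  obtain ⟨C2, hC2, h2⟩ := pow_mul_exp_bdd N (b := b / 2) (by positivity)
  refine ⟨C1 * ((2 + 4 / β) ^ N * (C2 * Real.exp (b / 2))), by positivity,
    fun r L hr hL => ?_⟩
  have hk := kk_nonneg hβ hr
  have hR := RR_ge_one hr
  have hrR : 1 + r ≤ 2 * RR r := by
    have : 0 < r⁻¹ := inv_pos.mpr hr
    have : r ≤ RR r := by unfold RR; linarith
    linarith
  have hq : L * (r - 1) ^ 2 ≤ (4 / β) * RR r * (L * kk β r) := by
    have := kk_ge hβ hr
    rw [div_le_iff₀ (by linarith)] at this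
    have h3 : β * (r - 1) ^ 2 ≤ kk β r * (2 * (2 * RR r)) :=
      this.trans (by gcongr)
    have h4 : (r - 1) ^ 2 ≤ (4 / β) * RR r * kk β r := by
      rw [div_mul_eq_mul_div, div_mul_eq_mul_div, le_div_iff₀ hβ]; linarith
    calc L * (r-1)^2 ≤ L * ((4 / β) * RR r * kk β r) := by gcongr
      _ = _ := by ring
  have hq2 : 1 + L * (r - 1) ^ 2 ≤ RR r * ((2 + 4 / β) * (1 + L * kk β r)) := by
    have hLk : 0 ≤ L * kk β r := by positivity
    have h4 : 0 < 4 / β := by positivity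
    have e1 : RR r * ((2 + 4 / β) * (1 + L * kk β r)) =
      (4 / β) * RR r * (L * kk β r) + 2 * RR r * (1 + L * kk β r) + 4 / β * RR r := by ring
    have : 1 ≤ 2 * RR r * (1 + L * kk β r) := by nlinarith
    have : 0 ≤ 4 / β * RR r := by positivity
    linarith
  have hexp : Real.exp (-(b * (L * kk β r))) ≤ Real.exp (-(b / 2 * kk β r)) *
      (Real.exp (-(b / 2 * (1 + L * kk β r))) * Real.exp (b / 2)) := by
    rw [← Real.exp_add, ← Real.exp_add]
    apply Real.exp_le_exp.mpr
    have : kk β r ≤ L * kk β r := by nlinarith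
    nlinarith
  have hLk : 0 ≤ L * kk β r := by positivity
  calc RR r ^ M * (1 + L * (r - 1) ^ 2) ^ N * Real.exp (-(b * (L * kk β r)))
      ≤ RR r ^ M * (RR r * ((2 + 4 / β) * (1 + L * kk β r))) ^ N *
        (Real.exp (-(b / 2 * kk β r)) *
      (Real.exp (-(b / 2 * (1 + L * kk β r))) * Real.exp (b / 2))) := by gcongr
    _ = (RR r ^ (M + N) * Real.exp (-(b / 2 * kk β r))) * ((2 + 4 / β) ^ N *
        (((1 + L * kk β r) ^ N * Real.exp (-(b / 2 * (1 + L * kk β r)))) * Real.exp (b / 2))) := by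
      rw [mul_pow, mul_pow, pow_add]; ring
    _ ≤ _ := by
      have := h1 r hr
      have := h2 (1 + L * kk β r) (by positivity)
      gcongr

lemma rpow_neg_sub_one_le {b r : ℝ} (hb : 0 ≤ b) (hr : 0 < r) (B : ℕ) (hB : b ≤ B) :
    |r ^ (-b) - 1| ≤ b * |r - 1| * RR r ^ (B + 1) := by
  have hR := RR_ge_one hr
  have hi : 0 < r⁻¹ := inv_pos.mpr hr
  have hlog : |Real.log r| ≤ |r - 1| * RR r := by
    have h1 := Real.log_le_sub_one_of_pos hr
    have h2 := Real.one_sub_inv_le_log_of_pos hr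
    rw [abs_le]
    constructor
    · have : -(|r - 1| * r⁻¹) ≤ 1 - r⁻¹ := by
        have : 1 - r⁻¹ = (r - 1) * r⁻¹ := by field_simp
        rw [this, ← neg_mul]
        gcongr; exact neg_abs_le _
      have h3 : |r - 1| * r⁻¹ ≤ |r - 1| * RR r := by
        gcongr; unfold RR; linarith
      linarith
    · have := le_abs_self (r - 1)
      have : |r - 1| * 1 ≤ |r - 1| * RR r := by gcongr
      linarith
  have hexp : ∀ y : ℝ, |Real.exp y - 1| ≤ |y| * Real.exp |y| := by
    intro y
    rcases le_total 0 y with h | h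
    · rw [abs_of_nonneg h, abs_of_nonneg (by linarith [Real.one_le_exp h])]
      have h1 := Real.add_one_le_exp (-y)
      have h2 : Real.exp (-y) * Real.exp y = 1 := by rw [← Real.exp_add]; simp
      nlinarith [Real.exp_pos y]
    · rw [abs_of_nonpos h, abs_of_nonpos (by linarith [Real.exp_le_one_iff.mpr h])]
      have h1 := Real.add_one_le_exp y
      have h2 := Real.one_le_exp (x := -y) (by linarith)
      nlinarith
  have e : r ^ (-b) = Real.exp (-b * Real.log r) := by
    rw [Real.rpow_def_of_pos hr, mul_comm]
  have hE : Real.exp |-b * Real.log r| ≤ RR r ^ B := by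
    rw [abs_mul, abs_neg, abs_of_nonneg hb]
    rcases le_total 0 (Real.log r) with h | h
    · rw [abs_of_nonneg h, mul_comm, ← Real.rpow_def_of_pos hr]
      exact rpow_le_RR hr B (by rw [abs_of_nonneg hb]; exact hB)
    · rw [abs_of_nonpos h, mul_comm, neg_mul, ← mul_neg, ← Real.rpow_def_of_pos hr]
      exact rpow_le_RR hr B (by rw [abs_neg, abs_of_nonneg hb]; exact hB)
  rw [e]
  refine (hexp _).trans ?_
  calc |-b * Real.log r| * Real.exp |-b * Real.log r| 
      ≤ (b * (|r - 1| * RR r)) * RR r ^ B := by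
        rw [abs_mul, abs_neg, abs_of_nonneg hb] at *
        gcongr
    _ = _ := by ring

/-- the weight in the variable `u = s^2` -/
def Wf (α β σ u : ℝ) : ℝ := (1 - u) ^ (2 * σ) * Real.exp (-(2 * α) / (1 - u) ^ β)

/-- the width -/
def tau (β d : ℝ) : ℝ := d ^ (1 + β / 2)

/-- `d` is the location of the peak for index `n` -/
def Pk (α β : ℝ) (n : ℕ) (d : ℝ) : Prop :=
  0 < d ∧ d ≤ 1 ∧ (n : ℝ) = (1 - d) * ((2 * α * β) * d ^ (-(β + 1)))

lemma tau_pos {β d : ℝ} (hd : 0 < d) : 0 < tau β d := Real.rpow_pos_of_pos hd _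

lemma tau_le {β d : ℝ} (hβ : 0 < β) (hd : 0 < d) (h1 : d ≤ 1) : tau β d ≤ d := by
  unfold tau
  calc d ^ (1 + β/2) ≤ d ^ (1:ℝ) := Real.rpow_le_rpow_of_exponent_ge hd h1 (by linarith)
    _ = d := Real.rpow_one d

lemma tau_sq {β d : ℝ} (hd : 0 < d) : tau β d ^ 2 * d ^ (-β) = d ^ 2 := by
  unfold tau
  rw [← Real.rpow_natCast, ← Real.rpow_mul hd.le, ← Real.rpow_add hd, ← Real.rpow_natCast]
  congr 1; push_cast; ring

lemma Wf_eq {α β σ u : ℝ} (hu : u < 1) :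
    Wf α β σ u = (1 - u) ^ (2 * σ) * Real.exp (-(2 * α * (1 - u) ^ (-β))) := by
  unfold Wf
  rw [Real.rpow_neg (by linarith)]
  congr 2; field_simp

lemma Wf_pos {α β σ u : ℝ} (hu : u < 1) : 0 < Wf α β σ u := by
  unfold Wf
  have : 0 < 1 - u := by linarith
  positivity

lemma exists_peak {α β : ℝ} (hα : 0 < α) (hβ : 0 < β) (n : ℕ) : ∃ d, Pk α β n d := by
  have hA : 0 < 2 * α * β := by positivity
  set g : ℝ → ℝ := fun d => (1 - d) * ((2 * α * β) * d ^ (-(β + 1))) with hg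
  set d0 : ℝ := min (1/2) (α * β / (n + 1)) with hd0
  have hd0p : 0 < d0 := by positivity
  have hd0h : d0 ≤ 1/2 := min_le_left _ _
  have hbig : (n : ℝ) ≤ g d0 := by
    have h1 : d0⁻¹ ≤ d0 ^ (-(β + 1)) := by
      rw [← Real.rpow_neg_one]
      exact Real.rpow_le_rpow_of_exponent_ge hd0p (by linarith) (by linarith)
    have h2 : d0 ≤ α * β / (n + 1) := min_le_right _ _
    have h3 : (n:ℝ) + 1 ≤ α * β * d0⁻¹ := by
      rw [le_div_iff₀ (by positivity)] at h2
      rw [← div_eq_mul_inv, le_div_iff₀ hd0p]; linarith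
    have h4 : α * β * d0⁻¹ ≤ α * β * d0 ^ (-(β + 1)) := by gcongr
    have : (1/2) * ((2 * α * β) * d0 ^ (-(β + 1))) ≤ g d0 := by
      simp only [hg]; gcongr; linarith
    nlinarith
  have hc : ContinuousOn g (Icc d0 1) := by
    apply ContinuousOn.mul (by fun_prop)
    apply ContinuousOn.mul (by fun_prop)
    intro x hx
    exact (Real.continuousAt_rpow_const _ _ (Or.inl (by linarith [hx.1]))).continuousWithinAt
  have := intermediate_value_Icc' (by linarith : d0 ≤ 1) hc
  have hmem : (n : ℝ) ∈ Icc (g 1) (g d0) := ⟨by simp [hg], hbig⟩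
  obtain ⟨d, hd, hde⟩ := this hmem
  exact ⟨d, by linarith [hd.1], hd.2, hde.symm⟩

lemma upper_pt {α β σ d u : ℝ} {n : ℕ} (hα : 0 < α) (hβ : 0 < β) (h : Pk α β n d)
    (h0 : 0 ≤ u) (h1 : u < 1) :
    u ^ n * Wf α β σ u ≤ ((1 - d) ^ n * Wf α β σ (1 - d)) *
      (((1 - u) / d) ^ (2 * σ) * Real.exp (-(2 * α * (d ^ (-β) * kk β ((1 - u) / d))))) := by
  obtain ⟨hd, hd1, hn⟩ := h
  have hA : 0 < 2 * α * β := by positivity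
  have hδ : 0 < 1 - u := by linarith
  have hpow : u ^ n ≤ (1 - d) ^ n * Real.exp (2 * α * β * d ^ (-(β + 1)) * (u - (1 - d))) := by
    rcases Nat.eq_zero_or_pos n with hz | hz
    · subst hz
      have hp : 0 < (2 * α * β) * d ^ (-(β + 1)) := by positivity
      have : 1 - d = 0 := by
        simp only [Nat.cast_zero] at hn
        rcases mul_eq_zero.mp hn.symm with h | h
        · exact h
        · exact absurd h hp.ne'
      rw [this]; simp
      positivity
    · have hnp : (0:ℝ) < n := by exact_mod_cast hz
      have hp : 0 < (2 * α * β) * d ^ (-(β + 1)) := by positivity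
      have hun : 0 < 1 - d := by
        rw [hn] at hnp
        exact pos_of_mul_pos_left hnp hp.le
      have h2 := Real.add_one_le_exp (u / (1 - d) - 1)
      have h3 : u ≤ (1 - d) * Real.exp (u / (1 - d) - 1) := by
        have : u / (1 - d) ≤ Real.exp (u / (1 - d) - 1) := by linarith
        rw [div_le_iff₀ hun] at this; linarith
      calc u ^ n ≤ ((1 - d) * Real.exp (u / (1 - d) - 1)) ^ n := by gcongr
        _ = (1 - d) ^ n * Real.exp (n * (u / (1 - d) - 1)) := by
          rw [mul_pow, ← Real.exp_nat_mul]
        _ = _ := by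
          rw [hn]; congr 2; field_simp
  have e1 : d ^ (-(β + 1)) = d ^ (-β) / d := by
    rw [neg_add, Real.rpow_add hd, Real.rpow_neg_one]; rfl
  have e2 : ((1 - u) / d) ^ (-β) = (1 - u) ^ (-β) / d ^ (-β) := Real.div_rpow hδ.le hd.le _
  have e3 : ((1 - u) / d) ^ (2 * σ) = (1 - u) ^ (2 * σ) / d ^ (2 * σ) := Real.div_rpow hδ.le hd.le _
  have hdb : 0 < d ^ (-β) := by positivity
  have hds : 0 < d ^ (2 * σ) := by positivity
  rw [Wf_eq h1, Wf_eq (by linarith)]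
  calc u ^ n * ((1 - u) ^ (2 * σ) * Real.exp (-(2 * α * (1 - u) ^ (-β))))
      ≤ ((1 - d) ^ n * Real.exp (2 * α * β * d ^ (-(β + 1)) * (u - (1 - d)))) *
         ((1 - u) ^ (2 * σ) * Real.exp (-(2 * α * (1 - u) ^ (-β)))) := by gcongr
    _ = _ := by
      have ed : 1 - (1 - d) = d := by ring
      rw [ed, e3]
      have : Real.exp (2 * α * β * d ^ (-(β + 1)) * (u - (1 - d))) *
          Real.exp (-(2 * α * (1 - u) ^ (-β))) =
          Real.exp (-(2 * α * d ^ (-β))) *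
          Real.exp (-(2 * α * (d ^ (-β) * kk β ((1 - u) / d)))) := by
        rw [← Real.exp_add, ← Real.exp_add]
        congr 1
        unfold kk
        rw [e2, e1]
        field_simp
        ring
      calc _ = (1 - d) ^ n * (1 - u) ^ (2 * σ) * (Real.exp (2 * α * β * d ^ (-(β + 1)) * (u - (1 - d))) *
          Real.exp (-(2 * α * (1 - u) ^ (-β)))) := by ring
        _ = _ := by rw [this]; field_simp

set_option maxHeartbeats 1000000 in
lemma lower_pt {α β : ℝ} (σ : ℝ) (hα : 0 < α) (hβ : 0 < β) :
    ∃ C : ℝ, 0 < C ∧ ∀ (n : ℕ) (d u : ℝ), Pk α β n d → 1 - d < u → u < 1 - d + tau β d / 2 →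
    (1 - d) ^ n * Wf α β σ (1 - d) ≤ C * (u ^ n * Wf α β σ u) := by
  set B : ℕ := ⌈β + 1⌉₊ with hB
  set M : ℕ := ⌈|2 * σ|⌉₊ with hM
  have hA : 0 < 2 * α * β := by positivity
  refine ⟨3 ^ M * Real.exp (2 * α * β * ((β + 1) * 3 ^ (B + 1)) + 2 * α * β * (1 + 2 ^ (β + 1))),
    by positivity, ?_⟩
  rintro n d u ⟨hd, hd1, hn⟩ hu1 hu2
  have htd := tau_le hβ hd hd1
  have htp := tau_pos (β := β) hd
  have hu0 : 0 < u := by linarith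
  have hδ : 0 < 1 - u := by linarith
  have hδd : d / 2 ≤ 1 - u := by linarith
  have hu3 : u < 1 := by linarith
  set ε := u - (1 - d) with hε
  have hε0 : 0 < ε := by linarith
  have hετ : ε ≤ tau β d / 2 := by linarith
  have hpow : (1 - d) ^ n ≤ u ^ n * Real.exp (-(n * (ε / u))) := by
    have h2 := Real.add_one_le_exp ((1 - d) / u - 1)
    have h3 : (1 - d) ≤ u * Real.exp ((1 - d) / u - 1) := by
      have : (1 - d) / u ≤ Real.exp ((1 - d) / u - 1) := by linarith
      rw [div_le_iff₀ hu0] at this; linarith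
    have e : (1 - d) / u - 1 = -(ε / u) := by rw [hε]; field_simp; ring
    calc (1 - d) ^ n ≤ (u * Real.exp ((1 - d) / u - 1)) ^ n := by
          gcongr
      _ = _ := by rw [mul_pow, ← Real.exp_nat_mul, e]; congr 2; ring
  have ed : 1 - (1 - d) = d := by ring
  have hdb : 0 < d ^ (-β) := by positivity
  set s := d / (1 - u) with hs
  have hs1 : 1 ≤ s := by rw [hs, le_div_iff₀ hδ]; linarith
  have hs2 : s ≤ 2 := by rw [hs, div_le_iff₀ hδ]; linarith
  have hRs : RR s ≤ 3 := by
    unfold RR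
    have : s⁻¹ ≤ 1 := inv_le_one_of_one_le₀ hs1
    linarith
  have hsp : 0 < s := by linarith
  have hsσ : d ^ (2 * σ) ≤ 3 ^ M * (1 - u) ^ (2 * σ) := by
    have h1 := rpow_le_RR hsp M (a := 2 * σ) (Nat.le_ceil _)
    rw [hs, Real.div_rpow hd.le hδ.le, div_le_iff₀ (by positivity)] at h1
    refine h1.trans ?_
    have := RR_ge_one hsp
    gcongr
  have hk : (1 - u) ^ (-β) - d ^ (-β) ≤ β * (1 - u) ^ (-(β + 1)) * ε := by
    have := kk_nonneg hβ hsp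
    unfold kk at this
    rw [hs, Real.div_rpow hd.le hδ.le] at this
    have e1 : (1 - u) ^ (-(β + 1)) = (1 - u) ^ (-β) / (1 - u) := by
      rw [neg_add, Real.rpow_add hδ, Real.rpow_neg_one]; rfl
    rw [e1]
    have hp : 0 < (1 - u) ^ (-β) := by positivity
    have e2 : d / (1 - u) - 1 = ε / (1 - u) := by rw [hε]; field_simp; ring
    rw [e2] at this
    have h5 := mul_nonneg this hp.le
    have e3 : (d ^ (-β) / (1 - u) ^ (-β) - 1 + β * (ε / (1 - u))) * (1 - u) ^ (-β)
      = d ^ (-β) - (1 - u) ^ (-β) + β * ((1 - u) ^ (-β) / (1 - u)) * ε := by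
      field_simp
    linarith
  set r := (1 - u) / d with hr
  have hrp : 0 < r := by positivity
  have hR3 : RR r ≤ 3 := by
    have : r = s⁻¹ := by rw [hr, hs, inv_div]
    rw [this]; unfold RR at *; rw [inv_inv]; linarith
  have hdiff : (1 - u) ^ (-(β + 1)) - d ^ (-(β + 1)) ≤
      d ^ (-(β + 1)) * ((β + 1) * (ε / d) * 3 ^ (B + 1)) := by
    have h1 := rpow_neg_sub_one_le (b := β + 1) (by linarith) hrp B (Nat.le_ceil _)
    have h2 := (le_abs_self _).trans h1
    have e4 : |r - 1| = ε / d := by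
      have : r - 1 = -(ε / d) := by rw [hr, hε]; field_simp; ring
      rw [this, abs_neg, abs_of_pos (by positivity)]
    rw [e4] at h2
    have h3 : r ^ (-(β + 1)) - 1 ≤ (β + 1) * (ε / d) * 3 ^ (B + 1) := by
      refine h2.trans ?_
      have := RR_ge_one hrp
      gcongr
    have h4 : (1 - u) ^ (-(β + 1)) = d ^ (-(β + 1)) * r ^ (-(β + 1)) := by
      rw [hr, Real.div_rpow hδ.le hd.le]; field_simp
    rw [h4]
    have h6 := mul_le_mul_of_nonneg_left h3 (by positivity : 0 ≤ d ^ (-(β + 1)))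
    linarith
  have hts := tau_sq (β := β) hd
  have hε2 : ε ^ 2 * d ^ (-β) ≤ d ^ 2 := by
    rw [← hts]; gcongr; linarith
  have e1 : d ^ (-(β + 1)) = d ^ (-β) / d := by
    rw [neg_add, Real.rpow_add hd, Real.rpow_neg_one]; rfl
  have hfirst : ε * (d ^ (-(β + 1)) * ((β + 1) * (ε / d) * 3 ^ (B + 1))) ≤ (β + 1) * 3 ^ (B + 1) := by
    rw [e1]
    have : ε * (d ^ (-β) / d * ((β + 1) * (ε / d) * 3 ^ (B + 1))) =
      (ε ^ 2 * d ^ (-β)) / d ^ 2 * ((β + 1) * 3 ^ (B + 1)) := by field_simp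
    rw [this]
    have h7 : (ε ^ 2 * d ^ (-β)) / d ^ 2 ≤ 1 := by rw [div_le_one (by positivity)]; exact hε2
    calc _ ≤ 1 * ((β + 1) * 3 ^ (B + 1)) := by gcongr
      _ = _ := one_mul _
  have hsecond : ε ^ 2 / u * d ^ (-(β + 1)) ≤ 1 + 2 ^ (β + 1) := by
    rcases le_total (1/2) u with h | h
    · have h2 : (tau β d / 2) ^ 2 * d ^ (-β) = d ^ 2 / 4 := by rw [← hts]; ring
      have h3 : ε ^ 2 * d ^ (-β) ≤ d ^ 2 / 4 := by rw [← h2]; gcongr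
      have h4 : ε ^ 2 / u * d ^ (-(β + 1)) ≤ 1 := by
        rw [e1, div_mul_div_comm, div_le_one (by positivity)]
        nlinarith
      have : (0:ℝ) < 2 ^ (β + 1) := by positivity
      linarith
    · have hd2 : 1/2 ≤ d := by linarith
      have h2 : ε ^ 2 / u ≤ 1 := by
        rw [div_le_one hu0]
        have : ε ≤ u := by linarith
        nlinarith
      have h3 : d ^ (-(β + 1)) ≤ 2 ^ (β + 1) := by
        calc d ^ (-(β + 1)) ≤ (1/2 : ℝ) ^ (-(β + 1)) :=
              Real.rpow_le_rpow_of_nonpos (by norm_num) hd2 (by linarith)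
          _ = 2 ^ (β + 1) := by
              rw [one_div, Real.inv_rpow (by norm_num), Real.rpow_neg (by norm_num), inv_inv]
      calc _ ≤ 1 * (2:ℝ) ^ (β + 1) := by gcongr
        _ ≤ _ := by linarith
  have hexp : -(n * (ε / u)) + (-(2 * α * d ^ (-β))) ≤
      (2 * α * β * ((β + 1) * 3 ^ (B + 1)) + 2 * α * β * (1 + 2 ^ (β + 1))) +
        (-(2 * α * (1 - u) ^ (-β))) := by
    have i1 : 2 * α * ((1 - u) ^ (-β) - d ^ (-β)) ≤ 2 * α * (β * (1 - u) ^ (-(β + 1)) * ε) := by gcongr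
    have i2 : (n:ℝ) * (ε / u) = 2 * α * β * (ε * d ^ (-(β + 1)) - ε ^ 2 / u * d ^ (-(β + 1))) := by
      rw [hn]
      have : 1 - d = u - ε := by rw [hε]; ring
      rw [this]; field_simp
    have i3 := mul_le_mul_of_nonneg_left hdiff hε0.le
    have i4 := mul_le_mul_of_nonneg_left (i3.trans hfirst) hA.le
    have i5 := mul_le_mul_of_nonneg_left hsecond hA.le
    rw [i2]
    linarith
  rw [Wf_eq hu3, Wf_eq (by linarith), ed]
  calc (1 - d) ^ n * (d ^ (2 * σ) * Real.exp (-(2 * α * d ^ (-β))))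
      ≤ (u ^ n * Real.exp (-(n * (ε / u)))) * ((3 ^ M * (1 - u) ^ (2 * σ)) * Real.exp (-(2 * α * d ^ (-β)))) := by
        have : 0 ≤ 1 - d := by linarith
        gcongr
    _ = (u ^ n * 3 ^ M * (1 - u) ^ (2 * σ)) * Real.exp (-(n * (ε / u)) + (-(2 * α * d ^ (-β)))) := by
        rw [Real.exp_add]; ring
    _ ≤ (u ^ n * 3 ^ M * (1 - u) ^ (2 * σ)) * Real.exp ((2 * α * β * ((β + 1) * 3 ^ (B + 1)) + 2 * α * β * (1 + 2 ^ (β + 1))) +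
        (-(2 * α * (1 - u) ^ (-β)))) := by gcongr
    _ = _ := by rw [Real.exp_add]; ring

/-- moments in the variable `u = s^2` -/
def mm (α β σ : ℝ) (n : ℕ) : ℝ := ∫ u in Ioo (0:ℝ) 1, u ^ n * Wf α β σ u

lemma Wf_bdd {α β : ℝ} (σ : ℝ) (hα : 0 < α) (hβ : 0 < β) :
    ∃ C : ℝ, 0 < C ∧ ∀ u : ℝ, 0 ≤ u → u < 1 → Wf α β σ u ≤ C := by
  obtain ⟨C, hC, h⟩ := rpow_exp_bdd (2 * σ) (b := 2 * α) (by positivity) hβ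
  refine ⟨C, hC, fun u h0 h1 => ?_⟩
  rw [Wf_eq h1]
  exact h _ (by linarith) (by linarith)

lemma Wf_meas (α β σ : ℝ) : Measurable (Wf α β σ) := by
  unfold Wf; fun_prop

lemma intg {α β : ℝ} (σ : ℝ) (hα : 0 < α) (hβ : 0 < β) {g : ℝ → ℝ} (hg : Continuous g) :
    IntegrableOn (fun u => g u * Wf α β σ u) (Ioo 0 1) := by
  obtain ⟨C, hC, h⟩ := Wf_bdd σ hα hβ
  obtain ⟨D, hD⟩ := isCompact_Icc.exists_bound_of_continuousOn (s := Icc (0:ℝ) 1) hg.continuousOn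
  apply Measure.integrableOn_of_bounded (M := D * C) (by simp)
  · exact (hg.measurable.mul (Wf_meas _ _ _)).aestronglyMeasurable
  · refine (ae_restrict_iff' measurableSet_Ioo).mpr (Filter.Eventually.of_forall fun u hu => ?_)
    have h1 := hD u ⟨hu.1.le, hu.2.le⟩
    have h2 := h u hu.1.le hu.2
    rw [norm_mul]
    rw [Real.norm_of_nonneg (Wf_pos hu.2).le]
    have := (Wf_pos (α := α) (β := β) (σ := σ) hu.2).le
    have h3 : 0 ≤ D := (norm_nonneg _).trans h1
    gcongr

lemma intg_pow {α β : ℝ} (σ : ℝ) (hα : 0 < α) (hβ : 0 < β) (n : ℕ) :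
    IntegrableOn (fun u => u ^ n * Wf α β σ u) (Ioo 0 1) := intg σ hα hβ (by fun_prop)

lemma mm_lower {α β : ℝ} (σ : ℝ) (hα : 0 < α) (hβ : 0 < β) :
    ∃ C : ℝ, 0 < C ∧ ∀ (n : ℕ) (d : ℝ), Pk α β n d →
    ((1 - d) ^ n * Wf α β σ (1 - d)) * tau β d ≤ C * mm α β σ n := by
  obtain ⟨C, hC, h⟩ := lower_pt σ hα hβ
  refine ⟨2 * C, by positivity, fun n d hp => ?_⟩
  obtain ⟨hd, hd1, hn⟩ := id hp
  have htd := tau_le hβ hd hd1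
  have htp := tau_pos (β := β) hd
  have hi := intg_pow σ hα hβ n
  have hsub : Ioo (1 - d) (1 - d + tau β d / 2) ⊆ Ioo (0:ℝ) 1 := by
    apply Ioo_subset_Ioo <;> linarith
  have h1 : ∫ u in Ioo (1 - d) (1 - d + tau β d / 2), u ^ n * Wf α β σ u ≤ mm α β σ n := by
    apply setIntegral_mono_set hi
    · refine (ae_restrict_iff' measurableSet_Ioo).mpr (Filter.Eventually.of_forall fun u hu => ?_)
      have := (Wf_pos (α := α) (β := β) (σ := σ) hu.2).le
      have := hu.1.le
      simp only [Pi.zero_apply]; positivity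
    · exact hsub.eventuallyLE
  have h2 : ∫ u in Ioo (1 - d) (1 - d + tau β d / 2), ((1 - d) ^ n * Wf α β σ (1 - d)) / C
      ≤ ∫ u in Ioo (1 - d) (1 - d + tau β d / 2), u ^ n * Wf α β σ u := by
    apply setIntegral_mono_on
    · exact integrableOn_const (by simp)
    · exact hi.mono_set hsub
    · exact measurableSet_Ioo
    · intro u hu
      rw [div_le_iff₀ hC]
      have := h n d u hp hu.1 hu.2
      linarith
  rw [setIntegral_const, measureReal_def, Real.volume_Ioo, ENNReal.toReal_ofReal (by linarith)] at h2
  have h3 := h2.trans h1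
  simp only [smul_eq_mul, add_sub_cancel_left] at h3
  rw [← mul_div_assoc, div_le_iff₀ hC] at h3
  linarith

lemma mm_pos {α β : ℝ} (σ : ℝ) (hα : 0 < α) (hβ : 0 < β) (n : ℕ) : 0 < mm α β σ n := by
  unfold mm
  rw [setIntegral_pos_iff_support_of_nonneg_ae]
  · have : (Function.support fun u => u ^ n * Wf α β σ u) ∩ Ioo 0 1 = Ioo (0:ℝ) 1 := by
      apply inter_eq_right.mpr
      intro u hu
      have h1 := Wf_pos (α := α) (β := β) (σ := σ) hu.2
      have h2 := pow_pos hu.1 n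
      exact (mul_pos h2 h1).ne'
    rw [this]; simp
  · refine (ae_restrict_iff' measurableSet_Ioo).mpr (Filter.Eventually.of_forall fun u hu => ?_)
    have := (Wf_pos (α := α) (β := β) (σ := σ) hu.2).le
    have := hu.1.le
    simp only [Pi.zero_apply]; positivity
  · exact intg_pow σ hα hβ n

lemma key {α β : ℝ} (σ : ℝ) (hα : 0 < α) (hβ : 0 < β) (M N : ℕ) :
    ∃ C : ℝ, 0 < C ∧ ∀ (n : ℕ) (d u : ℝ), Pk α β n d → 0 ≤ u → u < 1 →
    RR ((1 - u) / d) ^ M * (1 + ((u - (1 - d)) / tau β d) ^ 2) ^ N * (u ^ n * Wf α β σ u)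
      ≤ C / tau β d * mm α β σ n := by
  obtain ⟨C1, hC1, h1⟩ := mm_lower σ hα hβ
  obtain ⟨C2, hC2, h2⟩ := main_exp_bdd (M + ⌈|2 * σ|⌉₊) N (b := 2 * α) (by positivity) hβ
  refine ⟨C2 * C1, by positivity, fun n d u hp h0 hu => ?_⟩
  obtain ⟨hd, hd1, hn⟩ := id hp
  have htp := tau_pos (β := β) hd
  have hup := upper_pt (σ := σ) hα hβ hp h0 hu
  have hlow := h1 n d hp
  set r := (1 - u) / d with hr
  have hrp : 0 < r := div_pos (by linarith) hd
  have hR := RR_ge_one hrp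
  have hL : 1 ≤ d ^ (-β) := Real.one_le_rpow_of_pos_of_le_one_of_nonpos hd hd1 (by linarith)
  have hX : ((u - (1 - d)) / tau β d) ^ 2 = d ^ (-β) * (r - 1) ^ 2 := by
    have := tau_sq (β := β) hd
    rw [div_pow, div_eq_iff (by positivity)]
    have e : u - (1 - d) = -(d * (r - 1)) := by rw [hr]; field_simp; ring
    rw [e]
    linear_combination (-(r - 1) ^ 2) * this
  have h3 := h2 r (d ^ (-β)) hrp hL
  have h4 := rpow_le_RR hrp ⌈|2 * σ|⌉₊ (a := 2 * σ) (Nat.le_ceil _)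
  rw [hX]
  have hW := (Wf_pos (α := α) (β := β) (σ := σ) (u := 1 - d) (by linarith)).le
  have hdn : 0 ≤ 1 - d := by linarith
  set Z := (1 - d) ^ n * Wf α β σ (1 - d) with hZ
  have hZ0 : 0 ≤ Z := by positivity
  calc RR r ^ M * (1 + d ^ (-β) * (r - 1) ^ 2) ^ N * (u ^ n * Wf α β σ u)
      ≤ RR r ^ M * (1 + d ^ (-β) * (r - 1) ^ 2) ^ N * (Z * (RR r ^ ⌈|2 * σ|⌉₊ *
        Real.exp (-(2 * α * (d ^ (-β) * kk β r))))) := by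
        refine mul_le_mul_of_nonneg_left (hup.trans (by gcongr)) (by positivity)
    _ = (RR r ^ (M + ⌈|2 * σ|⌉₊) * (1 + d ^ (-β) * (r - 1) ^ 2) ^ N *
        Real.exp (-(2 * α * (d ^ (-β) * kk β r)))) * Z := by rw [pow_add]; ring
    _ ≤ C2 * Z := by gcongr
    _ ≤ C2 * (C1 * mm α β σ n / tau β d) := by
        gcongr; rw [le_div_iff₀ htp]; exact hlow
    _ = _ := by ring

lemma quad_int {α β : ℝ} (σ : ℝ) (hα : 0 < α) (hβ : 0 < β) (n : ℕ) (a b : ℝ) :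
    ∫ u in Ioo (0:ℝ) 1, (a - b * u) ^ 2 * (u ^ n * Wf α β σ u) =
      a ^ 2 * mm α β σ n - 2 * a * b * mm α β σ (n + 1) + b ^ 2 * mm α β σ (n + 2) := by
  have i0 := intg_pow σ hα hβ n
  have i1 := intg_pow σ hα hβ (n + 1)
  have i2 := intg_pow σ hα hβ (n + 2)
  have j : Integrable (fun u => a ^ 2 * (u ^ n * Wf α β σ u) -
      2 * a * b * (u ^ (n + 1) * Wf α β σ u)) (volume.restrict (Ioo 0 1)) :=
    (i0.const_mul _).sub (i1.const_mul _)
  unfold mm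
  rw [← integral_const_mul, ← integral_const_mul, ← integral_const_mul,
    ← integral_sub (i0.const_mul _) (i1.const_mul _),
    ← integral_add j (i2.const_mul _)]
  congr 1; ext u; ring

lemma quad_nonneg {α β : ℝ} (σ : ℝ) (n : ℕ) (a b : ℝ) :
    0 ≤ ∫ u in Ioo (0:ℝ) 1, (a - b * u) ^ 2 * (u ^ n * Wf α β σ u) := by
  apply setIntegral_nonneg measurableSet_Ioo
  intro u hu
  have := (Wf_pos (α := α) (β := β) (σ := σ) hu.2).le
  have := hu.1.le
  positivity

lemma mm_logconvex {α β : ℝ} (σ : ℝ) (hα : 0 < α) (hβ : 0 < β) (n : ℕ) :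
    mm α β σ (n + 1) ^ 2 ≤ mm α β σ n * mm α β σ (n + 2) := by
  have h := quad_nonneg (α := α) (β := β) σ n (mm α β σ (n + 2)) (mm α β σ (n + 1))
  rw [quad_int σ hα hβ] at h
  have h2 := mm_pos σ hα hβ (n + 2)
  have : 0 ≤ mm α β σ (n + 2) * (mm α β σ n * mm α β σ (n + 2) - mm α β σ (n + 1) ^ 2) := by
    nlinarith
  have := nonneg_of_mul_nonneg_right this h2
  linarith

lemma mm_ratio {α β : ℝ} (σ : ℝ) (hα : 0 < α) (hβ : 0 < β) :
    ∃ κ : ℝ, 0 < κ ∧ ∀ n, mm α β σ n ≤ κ * mm α β σ (n + 1) := by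
  have h0 := mm_pos σ hα hβ 0
  have h1 := mm_pos σ hα hβ 1
  refine ⟨mm α β σ 0 / mm α β σ 1, by positivity, fun n => ?_⟩
  induction n with
  | zero => simp; rw [div_mul_cancel₀ _ h1.ne']
  | succ k ih =>
    have hl := mm_logconvex σ hα hβ k
    have hk1 := mm_pos σ hα hβ (k + 1)
    have hk2 := mm_pos σ hα hβ (k + 2)
    have : mm α β σ (k+1) * mm α β σ (k+1) ≤ (mm α β σ 0 / mm α β σ 1 * mm α β σ (k + 2)) * mm α β σ (k + 1) := by
      nlinarith
    exact le_of_mul_le_mul_right this hk1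

lemma lint_cauchy {l : ℝ} (hl : 0 < l) (a : ℝ) :
    ∫⁻ s : ℝ, ENNReal.ofReal (l / (1 + (l * (s - a)) ^ 2)) = ENNReal.ofReal Real.pi := by
  have hintg : Integrable (fun s : ℝ => (1 + s ^ 2)⁻¹) := integrable_inv_one_add_sq
  have hi2 : Integrable (fun s : ℝ => (1 + (l * (s - a)) ^ 2)⁻¹) :=
    (hintg.comp_mul_left' hl.ne').comp_sub_right a
  have e : ∫ s : ℝ, l / (1 + (l * (s - a)) ^ 2) = Real.pi := by
    simp only [div_eq_mul_inv]
    rw [integral_const_mul, integral_sub_right_eq_self (fun s => (1 + (l * s) ^ 2)⁻¹) a,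
      Measure.integral_comp_mul_left (fun s => (1 + s ^ 2)⁻¹) l, integral_univ_inv_one_add_sq,
      abs_of_pos (by positivity)]
    simp only [smul_eq_mul]; field_simp
  rw [← e, ofReal_integral_eq_lintegral_ofReal]
  · simp only [div_eq_mul_inv]; exact hi2.const_mul _
  · exact Filter.Eventually.of_forall fun s => by simp only [Pi.zero_apply]; positivity

lemma key_int {α β : ℝ} (σ : ℝ) (hα : 0 < α) (hβ : 0 < β) (M N : ℕ) :
    ∃ C : ℝ, 0 < C ∧ ∀ (n : ℕ) (d : ℝ), Pk α β n d →
    ∫⁻ u in Ioo (0:ℝ) 1, ENNReal.ofReal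
      (RR ((1 - u) / d) ^ M * (1 + ((u - (1 - d)) / tau β d) ^ 2) ^ N * (u ^ n * Wf α β σ u))
      ≤ ENNReal.ofReal (C * mm α β σ n) := by
  obtain ⟨C, hC, h⟩ := key σ hα hβ M (N + 1)
  refine ⟨C * Real.pi, by positivity, fun n d hp => ?_⟩
  have htp := tau_pos (β := β) hp.1
  have hm := mm_pos σ hα hβ n
  calc _ ≤ ∫⁻ u in Ioo (0:ℝ) 1, ENNReal.ofReal (C * mm α β σ n) *
        ENNReal.ofReal ((tau β d)⁻¹ / (1 + ((tau β d)⁻¹ * (u - (1 - d))) ^ 2)) := by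
        apply setLIntegral_mono' measurableSet_Ioo
        intro u hu
        rw [← ENNReal.ofReal_mul (by positivity)]
        apply ENNReal.ofReal_le_ofReal
        have := h n d u hp hu.1.le hu.2
        have e : (tau β d)⁻¹ * (u - (1 - d)) = (u - (1 - d)) / tau β d := by ring
        rw [e, ← mul_div_assoc, le_div_iff₀ (by positivity)]
        rw [pow_succ] at this
        calc _ = RR ((1 - u) / d) ^ M * ((1 + ((u - (1 - d)) / tau β d) ^ 2) ^ N * (1 + ((u - (1 - d)) / tau β d) ^ 2)) * (u ^ n * Wf α β σ u) := by ring
          _ ≤ _ := this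
          _ = _ := by ring
    _ ≤ ∫⁻ u, ENNReal.ofReal (C * mm α β σ n) *
        ENNReal.ofReal ((tau β d)⁻¹ / (1 + ((tau β d)⁻¹ * (u - (1 - d))) ^ 2)) :=
        setLIntegral_le_lintegral _ _
    _ = _ := by
      rw [lintegral_const_mul' _ _ ENNReal.ofReal_ne_top, lint_cauchy (by positivity),
        ← ENNReal.ofReal_mul (by positivity)]
      congr 1; ring

lemma var_bound {α β : ℝ} (σ : ℝ) (hα : 0 < α) (hβ : 0 < β) :
    ∃ C : ℝ, 0 < C ∧ ∀ (n : ℕ) (d ρ : ℝ), Pk α β n d →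
    ρ ^ 2 * mm α β σ n - 2 * ρ * mm α β σ (n + 1) + mm α β σ (n + 2) ≤
      C * mm α β σ n * (tau β d ^ 2 + (ρ - (1 - d)) ^ 2) := by
  obtain ⟨C, hC, h⟩ := key_int σ hα hβ 0 1
  refine ⟨2 * C + 2, by positivity, fun n d ρ hp => ?_⟩
  have htp := tau_pos (β := β) hp.1
  have hm := mm_pos σ hα hβ n
  have hq : ∀ a : ℝ, ∫ u in Ioo (0:ℝ) 1, (a - u) ^ 2 * (u ^ n * Wf α β σ u) =
      a ^ 2 * mm α β σ n - 2 * a * mm α β σ (n + 1) + mm α β σ (n + 2) := by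
    intro a
    have := quad_int σ hα hβ n a 1
    simp only [one_mul, mul_one, one_pow] at this
    exact this
  have hi : ∀ a : ℝ, IntegrableOn (fun u => (a - u) ^ 2 * (u ^ n * Wf α β σ u)) (Ioo 0 1) := by
    intro a
    have := intg σ hα hβ (g := fun u => (a - u) ^ 2 * u ^ n) (by fun_prop)
    simpa only [mul_assoc] using this
  have h1 : ∫ u in Ioo (0:ℝ) 1, ((1 - d) - u) ^ 2 * (u ^ n * Wf α β σ u) ≤ tau β d ^ 2 * (C * mm α β σ n) := by
    rw [integral_eq_lintegral_of_nonneg_ae]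
    · apply ENNReal.toReal_le_of_le_ofReal (by positivity)
      rw [ENNReal.ofReal_mul (by positivity)]
      refine le_trans ?_ (mul_le_mul_right (h n d hp) _)
      rw [← lintegral_const_mul' _ _ ENNReal.ofReal_ne_top]
      apply setLIntegral_mono' measurableSet_Ioo
      intro u hu
      rw [← ENNReal.ofReal_mul (by positivity)]
      apply ENNReal.ofReal_le_ofReal
      have hW := (Wf_pos (α := α) (β := β) (σ := σ) hu.2).le
      have h0 := hu.1.le
      have e : tau β d ^ 2 * (RR ((1 - u) / d) ^ 0 * (1 + ((u - (1 - d)) / tau β d) ^ 2) ^ 1 * (u ^ n * Wf α β σ u))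
        = (tau β d ^ 2 + ((1 - d) - u) ^ 2) * (u ^ n * Wf α β σ u) := by
        field_simp; ring
      rw [e]
      have : 0 ≤ tau β d ^ 2 := by positivity
      gcongr; linarith
    · refine (ae_restrict_iff' measurableSet_Ioo).mpr (Filter.Eventually.of_forall fun u hu => ?_)
      have := (Wf_pos (α := α) (β := β) (σ := σ) hu.2).le
      have := hu.1.le
      simp only [Pi.zero_apply]; positivity
    · exact (hi _).aestronglyMeasurable
  rw [hq] at h1
  have hz : ∫ u in Ioo (0:ℝ) 1, (ρ - 2 * (1 - d) - (-1) * u) ^ 2 * (u ^ n * Wf α β σ u) =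
     (ρ - 2 * (1 - d)) ^ 2 * mm α β σ n + 2 * (ρ - 2 * (1 - d)) * mm α β σ (n + 1) + mm α β σ (n + 2) := by
    rw [quad_int σ hα hβ]; ring
  have hz0 := quad_nonneg (α := α) (β := β) σ n (ρ - 2 * (1 - d)) (-1)
  rw [hz] at hz0
  nlinarith [mul_nonneg hm.le (sq_nonneg (tau β d)), mul_nonneg (mul_nonneg hC.le hm.le) (sq_nonneg (ρ - (1-d)))]

lemma tau_comp {β d δ : ℝ} (hβ : 0 < β) (hd : 0 < d) (hδ : 0 < δ) :
    tau β d ≤ RR (δ / d) ^ ⌈1 + β / 2⌉₊ * tau β δ ∧ tau β δ ≤ RR (δ / d) ^ ⌈1 + β / 2⌉₊ * tau β d := by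
  have hr : 0 < δ / d := by positivity
  have hab : |1 + β / 2| = 1 + β / 2 := abs_of_pos (by positivity)
  have h1 := rpow_le_RR hr ⌈1 + β / 2⌉₊ (a := 1 + β / 2) (by rw [hab]; exact Nat.le_ceil _)
  have h2 := rpow_le_RR hr ⌈1 + β / 2⌉₊ (a := -(1 + β / 2)) (by rw [abs_neg, hab]; exact Nat.le_ceil _)
  unfold tau
  rw [Real.div_rpow hδ.le hd.le] at h1
  rw [Real.rpow_neg hr.le, Real.div_rpow hδ.le hd.le, inv_div] at h2
  have p1 : 0 < d ^ (1 + β / 2) := by positivity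
  have p2 : 0 < δ ^ (1 + β / 2) := by positivity
  rw [div_le_iff₀ p1] at h1
  rw [div_le_iff₀ p2] at h2
  exact ⟨h2, h1⟩

lemma idx_bound {α β : ℝ} (hα : 0 < α) (hβ : 0 < β) : ∃ (C : ℝ) (M : ℕ), 0 < C ∧
    ∀ (n : ℕ) (d x : ℝ), Pk α β n d → 0 ≤ x → x < 1 →
    1 + (tau β (1 - x) * ((n : ℝ) - x * ((2 * α * β) * (1 - x) ^ (-(β + 1))))) ^ 2 ≤
      C * RR ((1 - x) / d) ^ M * (1 + ((x - (1 - d)) / tau β d) ^ 2) := by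
  set B : ℕ := ⌈β + 1⌉₊ with hB
  set K : ℕ := ⌈1 + β / 2⌉₊ with hK
  refine ⟨1 + (2 * α * β * (2 * β + 1)) ^ 2, (B + 1 + K) * 2, by positivity, ?_⟩
  rintro n d x ⟨hd, hd1, hn⟩ h0 h1
  have hδ : 0 < 1 - x := by linarith
  have htp := tau_pos (β := β) hd
  have htx := tau_pos (β := β) hδ
  have htc := (tau_comp hβ hd hδ).2
  set r := (1 - x) / d with hr
  have hrp : 0 < r := by positivity
  have hR := RR_ge_one hrp
  have b1 := rpow_neg_sub_one_le (b := β + 1) (by linarith) hrp B (Nat.le_ceil _)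
  have b2 := rpow_neg_sub_one_le (b := β) (by linarith) hrp B (by
    have := Nat.le_ceil (β + 1); linarith)
  have e1 : d ^ (-(β + 1)) = d ^ (-β) / d := by
    rw [neg_add, Real.rpow_add hd, Real.rpow_neg_one]; rfl
  have e2 : (1 - x) ^ (-(β + 1)) = d ^ (-(β + 1)) * r ^ (-(β + 1)) := by
    rw [hr, Real.div_rpow hδ.le hd.le]; field_simp
  have e3 : (1 - x) ^ (-β) = d ^ (-β) * r ^ (-β) := by
    rw [hr, Real.div_rpow hδ.le hd.le]; field_simp
  have e4 : (1 - x) ^ (-(β + 1)) = (1 - x) ^ (-β) / (1 - x) := by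
    rw [neg_add, Real.rpow_add hδ, Real.rpow_neg_one]; rfl
  have hdp : 0 < d ^ (-β) := by positivity
  have hdp1 : 0 < d ^ (-(β + 1)) := by positivity
  have hle : d ^ (-β) ≤ d ^ (-(β + 1)) := Real.rpow_le_rpow_of_exponent_ge hd hd1 (by linarith)
  have e5 : (n : ℝ) - x * ((2 * α * β) * (1 - x) ^ (-(β + 1))) =
      2 * α * β * (d ^ (-β) * (r ^ (-β) - 1) - d ^ (-(β + 1)) * (r ^ (-(β + 1)) - 1)) := by
    have f1 : x * (1 - x) ^ (-(β + 1)) = d ^ (-(β + 1)) * r ^ (-(β + 1)) - d ^ (-β) * r ^ (-β) := by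
      rw [← e2, ← e3, e4]; field_simp; ring
    have f2 : (1 - d) * d ^ (-(β + 1)) = d ^ (-(β + 1)) - d ^ (-β) := by rw [e1]; field_simp
    rw [hn]
    linear_combination (2 * α * β) * f2 - (2 * α * β) * f1
  have hX : |r - 1| = |(x - (1 - d)) / tau β d| * tau β d / d := by
    have : r - 1 = -((x - (1 - d)) / tau β d) * tau β d / d := by rw [hr]; field_simp; ring
    rw [this, abs_div, abs_mul, abs_neg, abs_of_pos htp, abs_of_pos hd]
  set X := (x - (1 - d)) / tau β d with hXd
  have hbound : |(n : ℝ) - x * ((2 * α * β) * (1 - x) ^ (-(β + 1)))| ≤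
      2 * α * β * (d ^ (-(β + 1)) * ((2 * β + 1) * |r - 1| * RR r ^ (B + 1))) := by
    rw [e5, abs_mul, abs_of_pos (by positivity : 0 < 2 * α * β)]
    gcongr
    refine (abs_sub _ _).trans ?_
    rw [abs_mul, abs_mul, abs_of_pos hdp, abs_of_pos hdp1]
    calc _ ≤ d ^ (-(β + 1)) * (β * |r - 1| * RR r ^ (B + 1)) + d ^ (-(β + 1)) * ((β + 1) * |r - 1| * RR r ^ (B + 1)) := by gcongr
      _ = _ := by ring
  have hts := tau_sq (β := β) hd
  have h3 : |tau β (1 - x) * ((n : ℝ) - x * ((2 * α * β) * (1 - x) ^ (-(β + 1))))| ≤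
      2 * α * β * (2 * β + 1) * RR r ^ (B + 1 + K) * |X| := by
    rw [abs_mul, abs_of_pos htx]
    calc _ ≤ (RR r ^ K * tau β d) * (2 * α * β * (d ^ (-(β + 1)) * ((2 * β + 1) * |r - 1| * RR r ^ (B + 1)))) := by
          gcongr
      _ = 2 * α * β * (2 * β + 1) * RR r ^ (B + 1 + K) * |X| * ((tau β d ^ 2 * d ^ (-β)) / d ^ 2) := by
          rw [hX, e1, pow_add]; field_simp; ring
      _ = _ := by rw [hts, div_self (by positivity), mul_one]
  have h4 : (tau β (1 - x) * ((n : ℝ) - x * ((2 * α * β) * (1 - x) ^ (-(β + 1))))) ^ 2 ≤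
     (2 * α * β * (2 * β + 1)) ^ 2 * RR r ^ ((B + 1 + K) * 2) * X ^ 2 := by
    rw [← sq_abs, pow_mul, ← sq_abs X, ← mul_pow, ← mul_pow]
    gcongr
  have hRM : 1 ≤ RR r ^ ((B + 1 + K) * 2) := one_le_pow₀ hR
  have hc : 0 ≤ (2 * α * β * (2 * β + 1)) ^ 2 := sq_nonneg _
  set c := (2 * α * β * (2 * β + 1)) ^ 2
  set P := RR r ^ ((B + 1 + K) * 2)
  have : 0 ≤ X ^ 2 := sq_nonneg _
  have hcP : 0 ≤ c * P := by positivity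
  nlinarith [mul_nonneg (by linarith : 0 ≤ P) this]

lemma key2 {α β : ℝ} (σ : ℝ) (hα : 0 < α) (hβ : 0 < β) (M N : ℕ) :
    ∃ C : ℝ, 0 < C ∧ ∀ (n : ℕ) (d x : ℝ), Pk α β n d → 0 ≤ x → x < 1 →
    tau β d ^ 2 * (RR ((1 - x) / d) ^ M * (1 + ((x - (1 - d)) / tau β d) ^ 2) ^ N * (x ^ n * Wf α β σ x))
      ≤ C * mm α β σ n * (tau β (1 - x) /
        (1 + (tau β (1 - x) * ((n : ℝ) - x * ((2 * α * β) * (1 - x) ^ (-(β + 1))))) ^ 2)) := by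
  obtain ⟨C1, M1, hC1, h1⟩ := idx_bound hα hβ
  obtain ⟨C2, hC2, h2⟩ := key σ hα hβ (M + M1 + ⌈1 + β / 2⌉₊) (N + 1)
  refine ⟨C1 * C2, by positivity, fun n d x hp h0 hx => ?_⟩
  have hd := hp.1
  have hδ : 0 < 1 - x := by linarith
  have htp := tau_pos (β := β) hd
  have htx := tau_pos (β := β) hδ
  have htc := (tau_comp hβ hd hδ).1
  have hm := mm_pos σ hα hβ n
  have a1 := h1 n d x hp h0 hx
  have a2 := h2 n d x hp h0 hx
  have hW := (Wf_pos (α := α) (β := β) (σ := σ) hx).le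
  have hR := RR_ge_one (div_pos hδ hd)
  set R := RR ((1 - x) / d)
  set Y := 1 + ((x - (1 - d)) / tau β d) ^ 2 with hY
  have hY0 : 0 < Y := by positivity
  set Q := x ^ n * Wf α β σ x
  have hQ : 0 ≤ Q := by positivity
  set I := 1 + (tau β (1 - x) * ((n : ℝ) - x * ((2 * α * β) * (1 - x) ^ (-(β + 1))))) ^ 2 with hI
  have hI0 : 0 < I := by positivity
  rw [← mul_div_assoc, le_div_iff₀ hI0]
  calc tau β d ^ 2 * (R ^ M * Y ^ N * Q) * I
      ≤ tau β d ^ 2 * (R ^ M * Y ^ N * Q) * (C1 * R ^ M1 * Y) := by gcongr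
    _ = C1 * tau β d * (R ^ M * R ^ M1 * Y ^ (N + 1) * Q) * tau β d := by ring
    _ ≤ C1 * tau β d * (R ^ M * R ^ M1 * Y ^ (N + 1) * Q) * (R ^ ⌈1 + β / 2⌉₊ * tau β (1 - x)) := by gcongr
    _ = C1 * tau β d * (R ^ (M + M1 + ⌈1 + β / 2⌉₊) * Y ^ (N + 1) * Q) * tau β (1 - x) := by
      rw [pow_add, pow_add]; ring
    _ ≤ C1 * tau β d * (C2 / tau β d * mm α β σ n) * tau β (1 - x) := by gcongr
    _ = _ := by field_simp

lemma sum_cauchy {t : ℝ} (ht : 0 < t) (ht1 : t ≤ 1) (a : ℝ) :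
    ∑' n : ℕ, ENNReal.ofReal (t / (1 + (t * ((n:ℝ) - a)) ^ 2)) ≤ ENNReal.ofReal (3 * Real.pi) := by
  have h1 : ∀ n : ℕ, ENNReal.ofReal (t / (1 + (t * ((n:ℝ) - a)) ^ 2)) ≤
      ∫⁻ s in Ioc (n:ℝ) (n + 1), 3 * ENNReal.ofReal (t / (1 + (t * (s - a)) ^ 2)) := by
    intro n
    calc _ = ∫⁻ s in Ioc (n:ℝ) (n + 1), ENNReal.ofReal (t / (1 + (t * ((n:ℝ) - a)) ^ 2)) := by
          rw [setLIntegral_const]; simp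
      _ ≤ _ := by
          apply setLIntegral_mono' measurableSet_Ioc
          intro s hs
          have e3 : (3:ℝ≥0∞) = ENNReal.ofReal 3 := by simp
          rw [e3, ← ENNReal.ofReal_mul (by norm_num)]
          apply ENNReal.ofReal_le_ofReal
          rw [← mul_div_assoc, div_le_div_iff₀ (by positivity) (by positivity)]
          have hp : 0 ≤ s - n := by linarith [hs.1]
          have hq : s - n ≤ 1 := by linarith [hs.2]
          have hw : (t * (s - n)) ^ 2 ≤ 1 := by
            have : t * (s - n) ≤ 1 := by nlinarith
            have : 0 ≤ t * (s - n) := by positivity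
            nlinarith
          have : (t * (s - a)) ^ 2 ≤ 2 * (t * (n - a)) ^ 2 + 2 * (t * (s - n)) ^ 2 := by
            nlinarith [sq_nonneg (t * (n - a) - t * (s - n))]
          nlinarith [sq_nonneg (t * (n - a))]
  have hdisj : Pairwise (Function.onFun Disjoint fun n : ℕ => Ioc (n:ℝ) (n + 1)) := by
    intro i j hij
    apply Set.disjoint_left.mpr
    intro s hs hs'
    apply hij
    have h1 : (i:ℝ) < j + 1 := by linarith [hs.1, hs'.2]
    have h2 : (j:ℝ) < i + 1 := by linarith [hs'.1, hs.2]
    have h1' : i < j + 1 := by exact_mod_cast h1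
    have h2' : j < i + 1 := by exact_mod_cast h2
    omega
  calc _ ≤ ∑' n : ℕ, ∫⁻ s in Ioc (n:ℝ) (n + 1), 3 * ENNReal.ofReal (t / (1 + (t * (s - a)) ^ 2)) :=
        ENNReal.tsum_le_tsum h1
    _ = ∫⁻ s in ⋃ n : ℕ, Ioc (n:ℝ) (n + 1), 3 * ENNReal.ofReal (t / (1 + (t * (s - a)) ^ 2)) :=
        (lintegral_iUnion (fun _ => measurableSet_Ioc) hdisj _).symm
    _ ≤ ∫⁻ s, 3 * ENNReal.ofReal (t / (1 + (t * (s - a)) ^ 2)) := setLIntegral_le_lintegral _ _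
    _ = _ := by
      rw [lintegral_const_mul' _ _ (by simp), lint_cauchy ht]
      rw [ENNReal.ofReal_mul (by norm_num)]; simp

/-- the target weight in the variable `u = s^2` -/
def Vf (α β γ u : ℝ) : ℝ := (1 - u) ^ γ * Real.exp (-α / (1 - u) ^ β)

/-- the quotient of weights -/
def Gf (α β σ γ u : ℝ) : ℝ := Wf α β σ u / Vf α β γ u

lemma Vf_pos {α β γ u : ℝ} (hu : u < 1) : 0 < Vf α β γ u := by
  unfold Vf
  have : 0 < 1 - u := by linarith
  positivity

lemma Vf_meas (α β γ : ℝ) : Measurable (Vf α β γ) := by unfold Vf; fun_prop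

lemma Gf_meas (α β σ γ : ℝ) : Measurable (Gf α β σ γ) :=
  (Wf_meas α β σ).div (Vf_meas α β γ)

lemma Gf_pos {α β σ γ u : ℝ} (hu : u < 1) : 0 < Gf α β σ γ u := div_pos (Wf_pos hu) (Vf_pos hu)

lemma Vf_sq {α β σ γ u : ℝ} (hu : u < 1) :
    Vf α β γ u ^ 2 = (1 - u) ^ (2 * γ - 2 * σ) * Wf α β σ u := by
  have hδ : 0 < 1 - u := by linarith
  unfold Vf Wf
  rw [mul_pow, ← mul_assoc, ← Real.rpow_add hδ, ← Real.exp_nat_mul, ← Real.rpow_natCast,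
    ← Real.rpow_mul hδ.le]
  congr 2
  · push_cast; ring
  · push_cast; ring

lemma Gf_sq {α β σ γ u : ℝ} (hu : u < 1) :
    Gf α β σ γ u ^ 2 = (1 - u) ^ (-(2 * γ - 2 * σ)) * Wf α β σ u := by
  have hδ : 0 < 1 - u := by linarith
  have hW := Wf_pos (α := α) (β := β) (σ := σ) hu
  unfold Gf
  rw [div_pow, Vf_sq (σ := σ) hu, Real.rpow_neg hδ.le]
  have : 0 < (1 - u) ^ (2 * γ - 2 * σ) := by positivity
  field_simp

lemma rpow_W_bdd {α β : ℝ} (σ a : ℝ) (hα : 0 < α) (hβ : 0 < β) :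
    ∃ C : ℝ, 0 < C ∧ ∀ u : ℝ, 0 ≤ u → u < 1 → (1 - u) ^ a * Wf α β σ u ≤ C := by
  obtain ⟨C, hC, h⟩ := rpow_exp_bdd (a + 2 * σ) (b := 2 * α) (by positivity) hβ
  refine ⟨C, hC, fun u h0 h1 => ?_⟩
  have hδ : 0 < 1 - u := by linarith
  rw [Wf_eq h1, ← mul_assoc, ← Real.rpow_add hδ]
  exact h _ hδ (by linarith)

lemma Gf_sq_bdd {α β : ℝ} (σ γ : ℝ) (hα : 0 < α) (hβ : 0 < β) :
    ∃ C : ℝ, 0 < C ∧ ∀ u : ℝ, 0 ≤ u → u < 1 → Gf α β σ γ u ^ 2 ≤ C := by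
  obtain ⟨C, hC, h⟩ := rpow_W_bdd σ (-(2 * γ - 2 * σ)) hα hβ
  exact ⟨C, hC, fun u h0 h1 => by rw [Gf_sq h1]; exact h u h0 h1⟩

lemma diff_bound {α β : ℝ} (σ : ℝ) (hα : 0 < α) (hβ : 0 < β) :
    ∃ C : ℝ, 0 < C ∧ ∀ (n : ℕ) (d ρ : ℝ), Pk α β n d → 0 ≤ ρ →
    (ρ ^ (n + 1) / mm α β σ (n + 1) - ρ ^ n / mm α β σ n) ^ 2 ≤
      C * (ρ ^ n / mm α β σ n) ^ 2 * (tau β d ^ 2 + (ρ - (1 - d)) ^ 2) := by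
  obtain ⟨κ, hκ, hr⟩ := mm_ratio σ hα hβ
  obtain ⟨C, hC, hv⟩ := var_bound σ hα hβ
  refine ⟨κ ^ 2 * C, by positivity, fun n d ρ hp hρ => ?_⟩
  have m0 := mm_pos σ hα hβ n
  have m1 := mm_pos σ hα hβ (n + 1)
  have hl := mm_logconvex σ hα hβ n
  have h1 := hr n
  have h2 := hv n d ρ hp
  set T := tau β d ^ 2 + (ρ - (1 - d)) ^ 2 with hT
  have hT0 : 0 ≤ T := by positivity
  set a := mm α β σ n
  set b := mm α β σ (n + 1)
  set c := mm α β σ (n + 2)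
  have h3 : (ρ * a - b) ^ 2 ≤ C * a ^ 2 * T := by
    have : (ρ * a - b) ^ 2 ≤ a * (ρ ^ 2 * a - 2 * ρ * b + c) := by nlinarith
    have h4 := mul_le_mul_of_nonneg_left h2 m0.le
    linarith
  have e : (ρ ^ (n + 1) / b - ρ ^ n / a) ^ 2 = (ρ ^ n / a) ^ 2 * ((ρ * a - b) ^ 2 / b ^ 2) := by
    field_simp
    ring
  rw [e]
  have h5 : (ρ * a - b) ^ 2 / b ^ 2 ≤ κ ^ 2 * C * T := by
    rw [div_le_iff₀ (by positivity)]
    calc _ ≤ C * a ^ 2 * T := h3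
      _ ≤ C * (κ * b) ^ 2 * T := by gcongr
      _ = _ := by ring
  calc _ ≤ (ρ ^ n / a) ^ 2 * (κ ^ 2 * C * T) := by gcongr
    _ = _ := by ring

lemma between_sq {x y ρ c : ℝ} (hx : 0 ≤ x) (hy : 0 ≤ y) (hρ : 0 ≤ ρ) (h : ρ ^ 2 = x * y) :
    (ρ - c) ^ 2 ≤ (x - c) ^ 2 + (y - c) ^ 2 := by
  rcases le_total x y with hxy | hxy
  · have h1 : x ≤ ρ := by nlinarith
    have h2 : ρ ≤ y := by nlinarith
    rcases le_total c ρ with h3 | h3 <;> nlinarith [sq_nonneg (x - c), sq_nonneg (y - c)]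
  · have h1 : y ≤ ρ := by nlinarith
    have h2 : ρ ≤ x := by nlinarith
    rcases le_total c ρ with h3 | h3 <;> nlinarith [sq_nonneg (x - c), sq_nonneg (y - c)]

set_option maxHeartbeats 1000000 in
lemma term_bound {α β : ℝ} (σ γ : ℝ) (hα : 0 < α) (hβ : 0 < β) :
    ∃ (C : ℝ) (M : ℕ), 0 < C ∧ ∀ (n : ℕ) (d x y ρ : ℝ), Pk α β n d → 0 ≤ x → x < 1 → 0 ≤ y → y < 1 →
    0 ≤ ρ → ρ ^ 2 = x * y →
    Vf α β γ x ^ 2 * Gf α β σ γ y ^ 2 * (1 + ((x - y) / tau β (1 - x)) ^ 2) *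
      (tau β (1 - x) ^ 2 * (ρ ^ n / mm α β σ n) ^ 2 +
        (ρ ^ (n + 1) / mm α β σ (n + 1) - ρ ^ n / mm α β σ n) ^ 2) ≤
    C / mm α β σ n ^ 2 * (tau β d ^ 2 * (RR ((1 - x) / d) ^ M *
      (1 + ((x - (1 - d)) / tau β d) ^ 2) ^ 2 * (x ^ n * Wf α β σ x))) *
      (RR ((1 - y) / d) ^ M * (1 + ((y - (1 - d)) / tau β d) ^ 2) ^ 2 * (y ^ n * Wf α β σ y)) := by
  obtain ⟨C, hC, hdf⟩ := diff_bound σ hα hβ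
  set K : ℕ := ⌈1 + β / 2⌉₊ with hK
  set p := 2 * γ - 2 * σ with hp
  set P : ℕ := ⌈|p|⌉₊ with hP
  refine ⟨2 * (1 + C), P + 4 * K, by positivity, fun n d x y ρ hpk hx0 hx1 hy0 hy1 hρ hxy => ?_⟩
  have hd := hpk.1
  have hδx : 0 < 1 - x := by linarith
  have hδy : 0 < 1 - y := by linarith
  have htp := tau_pos (β := β) hd
  have htx := tau_pos (β := β) hδx
  obtain ⟨tc1, tc2⟩ := tau_comp hβ hd hδx
  have hdb := hdf n d ρ hpk hρ
  have hbt := between_sq (c := 1 - d) hx0 hy0 hρ hxy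
  have m0 := mm_pos σ hα hβ n
  rw [Vf_sq (σ := σ) hx1, Gf_sq hy1]
  have hWx := Wf_pos (α := α) (β := β) (σ := σ) hx1
  have hWy := Wf_pos (α := α) (β := β) (σ := σ) hy1
  have hrx : 0 < (1 - x) / d := by positivity
  have hry : 0 < (1 - y) / d := by positivity
  have hRx := RR_ge_one hrx
  have hRy := RR_ge_one hry
  have pw1 := rpow_le_RR hrx P (a := p) (Nat.le_ceil _)
  have pw2 := rpow_le_RR hry P (a := -p) (by rw [abs_neg]; exact Nat.le_ceil _)
  have epw : (1 - x) ^ p * (1 - y) ^ (-p) = ((1 - x) / d) ^ p * ((1 - y) / d) ^ (-p) := by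
    rw [Real.div_rpow hδx.le hd.le, Real.div_rpow hδy.le hd.le, Real.rpow_neg hd.le]
    field_simp
  set Rx := RR ((1 - x) / d)
  set Ry := RR ((1 - y) / d)
  set X := (x - (1 - d)) / tau β d with hX
  set Y := (y - (1 - d)) / tau β d with hY
  set t := tau β d
  set T := tau β (1 - x)
  have eX : x - (1 - d) = X * t := by rw [hX]; field_simp
  have eY : y - (1 - d) = Y * t := by rw [hY]; field_simp
  have hpw : (1 - x) ^ p * (1 - y) ^ (-p) ≤ Rx ^ P * Ry ^ P := by
    rw [epw]; gcongr
  have hRK : 1 ≤ Rx ^ K := one_le_pow₀ hRx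
  have hf2 : 1 + ((x - y) / T) ^ 2 ≤ 2 * Rx ^ (2 * K) * ((1 + X ^ 2) * (1 + Y ^ 2)) := by
    have e : x - y = (X - Y) * t := by linear_combination eX - eY
    have h1 : ((x - y) / T) ^ 2 ≤ (X - Y) ^ 2 * Rx ^ (2 * K) := by
      rw [e, div_pow, mul_pow, div_le_iff₀ (by positivity), mul_assoc]
      have : t ^ 2 ≤ (Rx ^ K * T) ^ 2 := by gcongr
      have e2 : (Rx ^ K * T) ^ 2 = Rx ^ (2 * K) * T ^ 2 := by rw [mul_pow, ← pow_mul, mul_comm K 2]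
      rw [e2] at this
      gcongr
    have h2 : 1 ≤ Rx ^ (2 * K) := one_le_pow₀ hRx
    have h3 : 1 + (X - Y) ^ 2 ≤ 2 * ((1 + X ^ 2) * (1 + Y ^ 2)) := by
      nlinarith [sq_nonneg (X + Y), sq_nonneg (X * Y)]
    have h4 : (1 + (X - Y) ^ 2) * Rx ^ (2 * K) ≤ 2 * ((1 + X ^ 2) * (1 + Y ^ 2)) * Rx ^ (2 * K) := by
      gcongr
    nlinarith
  have hf3 : T ^ 2 * (ρ ^ n / mm α β σ n) ^ 2 +
        (ρ ^ (n + 1) / mm α β σ (n + 1) - ρ ^ n / mm α β σ n) ^ 2 ≤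
        (ρ ^ n / mm α β σ n) ^ 2 * ((1 + C) * Rx ^ (2 * K) * t ^ 2 * ((1 + X ^ 2) * (1 + Y ^ 2))) := by
    have h1 : t ^ 2 + (ρ - (1 - d)) ^ 2 ≤ t ^ 2 * ((1 + X ^ 2) * (1 + Y ^ 2)) := by
      rw [eX, eY] at hbt
      have : 0 ≤ t ^ 2 * (X ^ 2 * Y ^ 2) := by positivity
      nlinarith
    have h2 : T ^ 2 ≤ Rx ^ (2 * K) * t ^ 2 := by
      have : T ^ 2 ≤ (Rx ^ K * t) ^ 2 := by gcongr
      have e2 : (Rx ^ K * t) ^ 2 = Rx ^ (2 * K) * t ^ 2 := by rw [mul_pow, ← pow_mul, mul_comm K 2]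
      rwa [e2] at this
    have h0 : 1 ≤ (1 + X ^ 2) * (1 + Y ^ 2) := by nlinarith [sq_nonneg X, sq_nonneg Y, sq_nonneg (X * Y)]
    have h00 : 1 ≤ Rx ^ (2 * K) := one_le_pow₀ hRx
    set c := (ρ ^ n / mm α β σ n) ^ 2 with hc
    have hc0 : 0 ≤ c := by positivity
    set D := (1 + X ^ 2) * (1 + Y ^ 2)
    calc _ ≤ (Rx ^ (2 * K) * t ^ 2 * 1) * c + C * c * (t ^ 2 + (ρ - (1 - d)) ^ 2) := by
          rw [mul_one]; gcongr
      _ ≤ (Rx ^ (2 * K) * t ^ 2 * D) * c + C * c * (1 * (t ^ 2 * D)) := by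
          rw [one_mul]; gcongr
      _ ≤ (Rx ^ (2 * K) * t ^ 2 * D) * c + C * c * (Rx ^ (2 * K) * (t ^ 2 * D)) := by gcongr
      _ = _ := by ring
  have ec : (ρ ^ n / mm α β σ n) ^ 2 = (x ^ n * y ^ n) / mm α β σ n ^ 2 := by
    rw [div_pow, ← pow_mul, mul_comm n 2, pow_mul, hxy, mul_pow]
  rw [ec] at hf3 ⊢
  calc _ ≤ ((Rx ^ P * Ry ^ P) * (Wf α β σ x * Wf α β σ y)) * (2 * Rx ^ (2 * K) * ((1 + X ^ 2) * (1 + Y ^ 2))) *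
        ((x ^ n * y ^ n) / mm α β σ n ^ 2 * ((1 + C) * Rx ^ (2 * K) * t ^ 2 * ((1 + X ^ 2) * (1 + Y ^ 2)))) := by
        refine mul_le_mul (mul_le_mul ?_ hf2 (by positivity) (by positivity)) hf3 (by positivity) (by positivity)
        calc _ = ((1 - x) ^ p * (1 - y) ^ (-p)) * (Wf α β σ x * Wf α β σ y) := by ring
          _ ≤ _ := by gcongr
    _ = 2 * (1 + C) / mm α β σ n ^ 2 * (t ^ 2 * (Rx ^ (P + 4 * K) *
      (1 + X ^ 2) ^ 2 * (x ^ n * Wf α β σ x))) *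
      (Ry ^ P * (1 + Y ^ 2) ^ 2 * (y ^ n * Wf α β σ y)) := by
      have : Rx ^ (P + 4 * K) = Rx ^ P * Rx ^ (2 * K) * Rx ^ (2 * K) := by
        rw [← pow_add, ← pow_add]; congr 1; ring
      rw [this]; ring
    _ ≤ _ := by
      have : Ry ^ P ≤ Ry ^ (P + 4 * K) := pow_le_pow_right₀ hRy (by omega)
      gcongr

lemma edge_bound {α β : ℝ} (σ γ : ℝ) (hα : 0 < α) (hβ : 0 < β) :
    ∃ C : ℝ, 0 < C ∧ ∀ (x y : ℝ), 0 ≤ x → x < 1 → 0 ≤ y → y < 1 →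
    Vf α β γ x ^ 2 * Gf α β σ γ y ^ 2 * (1 + ((x - y) / tau β (1 - x)) ^ 2) *
      (1 / mm α β σ 0) ^ 2 ≤ C := by
  obtain ⟨C1, hC1, h1⟩ := rpow_W_bdd σ (2 * γ - 2 * σ + -(2 + β)) hα hβ
  obtain ⟨C2, hC2, h2⟩ := Gf_sq_bdd σ γ hα hβ
  have m0 := mm_pos σ hα hβ 0
  refine ⟨2 * C1 * C2 * (1 / mm α β σ 0) ^ 2, by positivity, fun x y hx0 hx1 hy0 hy1 => ?_⟩
  have hδx : 0 < 1 - x := by linarith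
  have htx := tau_pos (β := β) hδx
  have ht1 : tau β (1 - x) ≤ 1 := (tau_le hβ hδx (by linarith)).trans (by linarith)
  have a1 := h1 x hx0 hx1
  have a2 := h2 y hy0 hy1
  have hV := Vf_sq (α := α) (β := β) (σ := σ) (γ := γ) hx1
  have e : ((tau β (1 - x)) ^ 2)⁻¹ = (1 - x) ^ (-(2 + β)) := by
    rw [Real.rpow_neg hδx.le]; congr 1
    unfold tau
    rw [← Real.rpow_natCast, ← Real.rpow_mul hδx.le]; congr 1; push_cast; ring
  have h3 : 1 + ((x - y) / tau β (1 - x)) ^ 2 ≤ 2 * ((tau β (1 - x)) ^ 2)⁻¹ := by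
    have p1 : 1 ≤ ((tau β (1 - x)) ^ 2)⁻¹ := by
      apply (one_le_inv₀ (by positivity)).mpr
      nlinarith
    have p2 : ((x - y) / tau β (1 - x)) ^ 2 ≤ ((tau β (1 - x)) ^ 2)⁻¹ := by
      rw [div_pow, div_eq_mul_inv]
      have : (x - y) ^ 2 ≤ 1 := by nlinarith
      calc _ ≤ 1 * ((tau β (1 - x)) ^ 2)⁻¹ := by gcongr
        _ = _ := one_mul _
    linarith
  refine mul_le_mul_of_nonneg_right ?_ (by positivity)
  calc _ ≤ Vf α β γ x ^ 2 * C2 * (2 * ((tau β (1 - x)) ^ 2)⁻¹) := by gcongr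
    _ = 2 * (Vf α β γ x ^ 2 * (1 - x) ^ (-(2 + β))) * C2 := by rw [e]; ring
    _ ≤ 2 * C1 * C2 := by
      gcongr
      rw [hV]
      rw [Real.rpow_add hδx] at a1
      linarith

lemma S_bound {α β : ℝ} (σ γ : ℝ) (hα : 0 < α) (hβ : 0 < β) :
    ∃ C : ℝ, 0 < C ∧ ∀ x : ℝ, 0 ≤ x → x < 1 →
    ∫⁻ y in Ioo (0:ℝ) 1, ENNReal.ofReal (Vf α β γ x ^ 2 * Gf α β σ γ y ^ 2 *
      (1 + ((x - y) / tau β (1 - x)) ^ 2)) *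
      (ENNReal.ofReal ((1 / mm α β σ 0) ^ 2) +
        ∑' n : ℕ, ENNReal.ofReal (tau β (1 - x) ^ 2 * (√(x * y) ^ n / mm α β σ n) ^ 2 +
        (√(x * y) ^ (n + 1) / mm α β σ (n + 1) - √(x * y) ^ n / mm α β σ n) ^ 2)) ≤ ENNReal.ofReal C := by
  obtain ⟨C0, hC0, h0⟩ := edge_bound σ γ hα hβ
  obtain ⟨C1, M, hC1, h1⟩ := term_bound σ γ hα hβ
  obtain ⟨C2, hC2, h2⟩ := key_int σ hα hβ M 2
  obtain ⟨C3, hC3, h3⟩ := key2 σ hα hβ M 2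
  choose d hd using fun n => exists_peak hα hβ n
  refine ⟨C0 + C1 * C2 * C3 * (3 * Real.pi), by positivity, fun x hx0 hx1 => ?_⟩
  have hδx : 0 < 1 - x := by linarith
  have htx := tau_pos (β := β) hδx
  have ht1 : tau β (1 - x) ≤ 1 := (tau_le hβ hδx (by linarith)).trans (by linarith)
  set A : ℕ → ℝ := fun n => tau β (d n) ^ 2 * (RR ((1 - x) / d n) ^ M *
      (1 + ((x - (1 - d n)) / tau β (d n)) ^ 2) ^ 2 * (x ^ n * Wf α β σ x)) with hA
  set Bf : ℕ → ℝ → ℝ := fun n y => (RR ((1 - y) / d n) ^ M *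
      (1 + ((y - (1 - d n)) / tau β (d n)) ^ 2) ^ 2 * (y ^ n * Wf α β σ y)) with hBf
  have hA0 : ∀ n, 0 ≤ A n := by
    intro n
    have hW := Wf_pos (α := α) (β := β) (σ := σ) hx1
    have := RR_ge_one (div_pos hδx (hd n).1)
    simp only [hA]; positivity
  have hBm : ∀ n, Measurable (Bf n) := by
    intro n
    have := Wf_meas α β σ
    simp only [hBf]; unfold RR; fun_prop
  have hpt : ∀ y ∈ Ioo (0:ℝ) 1, ENNReal.ofReal (Vf α β γ x ^ 2 * Gf α β σ γ y ^ 2 *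
      (1 + ((x - y) / tau β (1 - x)) ^ 2)) *
      (ENNReal.ofReal ((1 / mm α β σ 0) ^ 2) +
        ∑' n : ℕ, ENNReal.ofReal (tau β (1 - x) ^ 2 * (√(x * y) ^ n / mm α β σ n) ^ 2 +
        (√(x * y) ^ (n + 1) / mm α β σ (n + 1) - √(x * y) ^ n / mm α β σ n) ^ 2)) ≤
      ENNReal.ofReal C0 + ∑' n : ℕ, ENNReal.ofReal (C1 / mm α β σ n ^ 2 * A n) * ENNReal.ofReal (Bf n y) := by
    intro y hy
    rw [mul_add, ← ENNReal.tsum_mul_left]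
    refine add_le_add ?_ (ENNReal.tsum_le_tsum fun n => ?_)
    · rw [← ENNReal.ofReal_mul (by positivity)]
      exact ENNReal.ofReal_le_ofReal (h0 x y hx0 hx1 hy.1.le hy.2)
    · have m0 := mm_pos σ hα hβ n
      rw [← ENNReal.ofReal_mul (by positivity), ← ENNReal.ofReal_mul (by have := hA0 n; positivity)]
      exact ENNReal.ofReal_le_ofReal (h1 n (d n) x y _ (hd n) hx0 hx1 hy.1.le hy.2
        (Real.sqrt_nonneg _) (Real.sq_sqrt (mul_nonneg hx0 hy.1.le)))
  calc _ ≤ ∫⁻ y in Ioo (0:ℝ) 1, (ENNReal.ofReal C0 +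
        ∑' n : ℕ, ENNReal.ofReal (C1 / mm α β σ n ^ 2 * A n) * ENNReal.ofReal (Bf n y)) :=
        setLIntegral_mono' measurableSet_Ioo hpt
    _ = ENNReal.ofReal C0 + ∑' n : ℕ, ENNReal.ofReal (C1 / mm α β σ n ^ 2 * A n) *
        ∫⁻ y in Ioo (0:ℝ) 1, ENNReal.ofReal (Bf n y) := by
        rw [lintegral_add_left measurable_const, lintegral_tsum]
        · congr 1
          · simp
          · congr 1; ext n
            rw [lintegral_const_mul' _ _ ENNReal.ofReal_ne_top]
        · intro n
          exact ((hBm n).ennreal_ofReal.const_mul _).aemeasurable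
    _ ≤ ENNReal.ofReal C0 + ∑' n : ℕ, ENNReal.ofReal (C1 * C2 * C3) * ENNReal.ofReal (tau β (1 - x) /
        (1 + (tau β (1 - x) * ((n : ℝ) - x * ((2 * α * β) * (1 - x) ^ (-(β + 1))))) ^ 2)) := by
        refine add_le_add le_rfl (ENNReal.tsum_le_tsum fun n => ?_)
        have m0 := mm_pos σ hα hβ n
        calc _ ≤ ENNReal.ofReal (C1 / mm α β σ n ^ 2 * A n) * ENNReal.ofReal (C2 * mm α β σ n) := by
              exact mul_le_mul_right (h2 n (d n) (hd n)) _
          _ ≤ _ := by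
              rw [← ENNReal.ofReal_mul (by have := hA0 n; positivity), ← ENNReal.ofReal_mul (by positivity)]
              apply ENNReal.ofReal_le_ofReal
              have := h3 n (d n) x (hd n) hx0 hx1
              calc C1 / mm α β σ n ^ 2 * A n * (C2 * mm α β σ n) = (C1 * C2 / mm α β σ n) * A n := by
                    field_simp
                _ ≤ (C1 * C2 / mm α β σ n) * _ := mul_le_mul_of_nonneg_left this (by positivity)
                _ = _ := by field_simp
    _ ≤ _ := by
        rw [ENNReal.tsum_mul_left, ENNReal.ofReal_add hC0.le (by positivity),
          ENNReal.ofReal_mul (p := C1 * C2 * C3) (by positivity)]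
        gcongr
        exact sum_cauchy htx ht1 _

/-- The Fourier series with real coefficients `c`. -/
def Fs (c : ℕ → ℝ) (θ : ℝ) : ℂ := ∑' n : ℕ, (c n : ℂ) * Complex.exp (I * θ) ^ n

lemma norm_expI (θ : ℝ) : ‖Complex.exp (I * θ)‖ = 1 := by
  rw [mul_comm]; exact Complex.norm_exp_ofReal_mul_I θ

lemma Fs_summable {c : ℕ → ℝ} (hc : Summable fun n => |c n|) (θ : ℝ) :
    Summable fun n : ℕ => (c n : ℂ) * Complex.exp (I * θ) ^ n := by
  apply Summable.of_norm
  simpa [norm_expI] using hc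

lemma exp_orth (n m : ℕ) : ∫ θ in (-Real.pi)..Real.pi,
    Complex.exp (I * θ) ^ n * (starRingEnd ℂ) (Complex.exp (I * θ) ^ m) =
    if n = m then (2 * Real.pi : ℂ) else 0 := by
  have e : ∀ θ : ℝ, Complex.exp (I * θ) ^ n * (starRingEnd ℂ) (Complex.exp (I * θ) ^ m) =
      Complex.exp ((((n : ℤ) - (m : ℤ) : ℤ) * I : ℂ) * θ) := by
    intro θ
    rw [map_pow, ← Complex.exp_conj, ← Complex.exp_nat_mul, ← Complex.exp_nat_mul,
      ← Complex.exp_add]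
    congr 1
    simp
    ring
  simp_rw [e]
  split_ifs with h
  · subst h
    simp
    ring
  · have hne : ((((n : ℤ) - (m : ℤ) : ℤ) : ℂ) * I) ≠ 0 := by
      apply mul_ne_zero _ I_ne_zero
      rw [Int.cast_ne_zero]; omega
    rw [integral_exp_mul_complex hne]
    have : Complex.exp ((((n : ℤ) - (m : ℤ) : ℤ) * I : ℂ) * (Real.pi : ℝ)) =
        Complex.exp ((((n : ℤ) - (m : ℤ) : ℤ) * I : ℂ) * ((-Real.pi : ℝ) : ℂ)) := by
      rw [Complex.exp_eq_exp_iff_exists_int]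
      refine ⟨(n : ℤ) - m, ?_⟩
      push_cast; ring
    rw [this]; simp

lemma parseval_fin (c : ℕ → ℝ) (N : ℕ) : ∫ θ in (-Real.pi)..Real.pi,
    ‖∑ n ∈ Finset.range N, (c n : ℂ) * Complex.exp (I * θ) ^ n‖ ^ 2 =
    2 * Real.pi * ∑ n ∈ Finset.range N, c n ^ 2 := by
  apply Complex.ofReal_injective
  rw [← intervalIntegral.integral_ofReal]
  have e : ∀ θ : ℝ, ((‖∑ n ∈ Finset.range N, (c n : ℂ) * Complex.exp (I * θ) ^ n‖ ^ 2 : ℝ) : ℂ) =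
      ∑ n ∈ Finset.range N, ∑ m ∈ Finset.range N, ((c n : ℂ) * c m) *
        (Complex.exp (I * θ) ^ n * (starRingEnd ℂ) (Complex.exp (I * θ) ^ m)) := by
    intro θ
    push_cast
    rw [← Complex.mul_conj', map_sum, Finset.sum_mul_sum]
    refine Finset.sum_congr rfl fun n _ => Finset.sum_congr rfl fun m _ => ?_
    rw [map_mul, Complex.conj_ofReal]; ring
  simp_rw [e]
  have hcont : ∀ n m : ℕ, Continuous fun θ : ℝ => ((c n : ℂ) * c m) *
        (Complex.exp (I * θ) ^ n * (starRingEnd ℂ) (Complex.exp (I * θ) ^ m)) := by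
    intro n m
    have : Continuous fun θ : ℝ => (starRingEnd ℂ) (Complex.exp (I * θ) ^ m) :=
      Complex.continuous_conj.comp (by fun_prop)
    fun_prop
  rw [intervalIntegral.integral_finsetSum]
  · push_cast
    rw [Finset.mul_sum]
    refine Finset.sum_congr rfl fun n hn => ?_
    rw [intervalIntegral.integral_finsetSum]
    · simp_rw [intervalIntegral.integral_const_mul, exp_orth]
      rw [Finset.sum_eq_single n]
      · simp; ring
      · intro m _ hm; simp [hm.symm]
      · intro h; exact absurd hn h
    · intro m _; exact (hcont n m).intervalIntegrable _ _
  · intro n _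
    exact (continuous_finsetSum _ fun m _ => hcont n m).intervalIntegrable _ _

lemma parseval_le {c : ℕ → ℝ} (hc : Summable fun n => |c n|) :
    ∫⁻ θ in Ioo (-Real.pi) Real.pi, ENNReal.ofReal (‖Fs c θ‖ ^ 2) ≤
    ENNReal.ofReal (2 * Real.pi) * ∑' n, ENNReal.ofReal (c n ^ 2) := by
  have hlim : ∀ θ : ℝ, Filter.liminf (fun N => ENNReal.ofReal
      (‖∑ n ∈ Finset.range N, (c n : ℂ) * Complex.exp (I * θ) ^ n‖ ^ 2)) Filter.atTop =
      ENNReal.ofReal (‖Fs c θ‖ ^ 2) := by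
    intro θ
    apply Filter.Tendsto.liminf_eq
    apply ENNReal.tendsto_ofReal
    exact ((Fs_summable hc θ).hasSum.tendsto_sum_nat.norm).pow 2
  have hpi := Real.pi_pos
  simp_rw [← hlim]
  refine (lintegral_liminf_le fun N => ?_).trans ?_
  · apply ENNReal.measurable_ofReal.comp
    apply Continuous.measurable
    fun_prop
  · refine Filter.liminf_le_of_le (by isBoundedDefault) fun b hb => ?_
    obtain ⟨N, hN⟩ := hb.exists
    refine hN.trans ?_
    rw [← ofReal_integral_eq_lintegral_ofReal, ← integral_Ioc_eq_integral_Ioo,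
      ← intervalIntegral.integral_of_le (by linarith), parseval_fin,
      ENNReal.ofReal_mul (by positivity)]
    · refine mul_le_mul_right ?_ _
      rw [ENNReal.ofReal_sum_of_nonneg (fun i _ => sq_nonneg _)]
      exact ENNReal.sum_le_tsum _
    · have : Continuous fun θ : ℝ => ‖∑ n ∈ Finset.range N, (c n : ℂ) * Complex.exp (I * θ) ^ n‖ ^ 2 := by
        fun_prop
      exact (this.integrableOn_Icc).mono_set Ioo_subset_Icc_self
    · exact Filter.Eventually.of_forall fun θ => by positivity

/-- Coefficients of `(1 - e^{iθ}) F`. -/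
def shf (c : ℕ → ℝ) : ℕ → ℝ
  | 0 => c 0
  | n + 1 => c (n + 1) - c n

lemma shf_summable {c : ℕ → ℝ} (hc : Summable fun n => |c n|) : Summable fun n => |shf c n| := by
  rw [← summable_nat_add_iff 1]
  have h1 := (summable_nat_add_iff 1).mpr hc
  refine Summable.of_nonneg_of_le (fun _ => abs_nonneg _) (fun n => ?_) (h1.add hc)
  exact abs_sub _ _

lemma Fs_shf {c : ℕ → ℝ} (hc : Summable fun n => |c n|) (θ : ℝ) :
    Fs (shf c) θ = (1 - Complex.exp (I * θ)) * Fs c θ := by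
  have h1 := Fs_summable hc θ
  have h2 := Fs_summable (shf_summable hc) θ
  unfold Fs
  rw [h2.tsum_eq_zero_add, sub_mul, one_mul]
  have h3 := (summable_nat_add_iff 1).mpr h1
  have h4 := h1.mul_left (Complex.exp (I * θ))
  rw [← tsum_mul_left, h1.tsum_eq_zero_add, add_sub_assoc, ← h3.tsum_sub h4]
  refine congrArg₂ (· + ·) (by simp [shf]) (tsum_congr fun n => ?_)
  simp only [shf]; push_cast; ring

lemma weighted_parseval {c : ℕ → ℝ} (hc : Summable fun n => |c n|) (t : ℝ) :
    ∫⁻ θ in Ioo (-Real.pi) Real.pi, ENNReal.ofReal (‖Fs c θ‖ ^ 2 *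
      (t ^ 2 + ‖1 - Complex.exp (I * θ)‖ ^ 2)) ≤
    ENNReal.ofReal (2 * Real.pi) * (ENNReal.ofReal (c 0 ^ 2) +
      ∑' n, ENNReal.ofReal (t ^ 2 * c n ^ 2 + (c (n + 1) - c n) ^ 2)) := by
  have e : ∀ θ : ℝ, ENNReal.ofReal (‖Fs c θ‖ ^ 2 * (t ^ 2 + ‖1 - Complex.exp (I * θ)‖ ^ 2)) =
      ENNReal.ofReal (t ^ 2) * ENNReal.ofReal (‖Fs c θ‖ ^ 2) + ENNReal.ofReal (‖Fs (shf c) θ‖ ^ 2) := by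
    intro θ
    rw [Fs_shf hc, ← ENNReal.ofReal_mul (by positivity), ← ENNReal.ofReal_add (by positivity) (by positivity)]
    congr 1
    rw [norm_mul]; ring
  have hm : Measurable fun θ : ℝ => Fs c θ := by
    apply Continuous.measurable
    unfold Fs
    refine continuous_tsum (fun n => by fun_prop) hc fun n θ => ?_
    simp [norm_expI]
  simp_rw [e]
  rw [lintegral_add_left (by fun_prop), lintegral_const_mul' _ _ ENNReal.ofReal_ne_top]
  calc _ ≤ ENNReal.ofReal (t ^ 2) * (ENNReal.ofReal (2 * Real.pi) * ∑' n, ENNReal.ofReal (c n ^ 2)) +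
        ENNReal.ofReal (2 * Real.pi) * ∑' n, ENNReal.ofReal (shf c n ^ 2) :=
        add_le_add (mul_le_mul_right (parseval_le hc) _) (parseval_le (shf_summable hc))
    _ = _ := by
        rw [tsum_eq_zero_add' (f := fun n => ENNReal.ofReal (shf c n ^ 2)) ENNReal.summable]
        simp only [shf]
        have : ∀ n, ENNReal.ofReal (t ^ 2 * c n ^ 2 + (c (n + 1) - c n) ^ 2) =
          ENNReal.ofReal (t ^ 2) * ENNReal.ofReal (c n ^ 2) + ENNReal.ofReal ((c (n + 1) - c n) ^ 2) := by
          intro n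
          rw [ENNReal.ofReal_add (by positivity) (by positivity), ENNReal.ofReal_mul (by positivity)]
        simp_rw [this]
        rw [ENNReal.tsum_add, ENNReal.tsum_mul_left]
        ring

lemma chord_int {t : ℝ} (ht : 0 < t) :
    ∫⁻ θ in Ioo (-Real.pi) Real.pi, ENNReal.ofReal (1 / (t ^ 2 + ‖1 - Complex.exp (I * θ)‖ ^ 2)) ≤
    ENNReal.ofReal (Real.pi ^ 2 / (2 * t)) := by
  have hpi := Real.pi_pos
  set l := 2 / (Real.pi * t) with hl
  have hl0 : 0 < l := by positivity
  calc _ ≤ ∫⁻ θ in Ioo (-Real.pi) Real.pi, ENNReal.ofReal (Real.pi / (2 * t)) *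
        ENNReal.ofReal (l / (1 + (l * (θ - 0)) ^ 2)) := by
        refine setLIntegral_mono' measurableSet_Ioo fun θ hθ => ?_
        rw [← ENNReal.ofReal_mul (by positivity)]
        apply ENNReal.ofReal_le_ofReal
        have h1 : 2 / Real.pi * |θ| ≤ ‖1 - Complex.exp (I * θ)‖ := by
          rw [norm_sub_rev, Complex.norm_exp_I_mul_ofReal_sub_one, norm_mul, Real.norm_eq_abs, Real.norm_eq_abs]
          have := Real.mul_abs_le_abs_sin (x := θ / 2) (by
            rw [abs_div, abs_two]
            have : |θ| ≤ Real.pi := abs_le.mpr ⟨hθ.1.le, hθ.2.le⟩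
            linarith)
          rw [abs_div, abs_two] at this
          rw [abs_two]
          linarith
        have h2 : (2 / Real.pi * |θ|) ^ 2 ≤ ‖1 - Complex.exp (I * θ)‖ ^ 2 :=
          pow_le_pow_left₀ (by positivity) h1 2
        rw [mul_pow, sq_abs] at h2
        calc _ ≤ 1 / (t ^ 2 + (2 / Real.pi) ^ 2 * θ ^ 2) := by gcongr
          _ = _ := by
            rw [hl, sub_zero]; field_simp
    _ ≤ ENNReal.ofReal (Real.pi / (2 * t)) * ∫⁻ θ, ENNReal.ofReal (l / (1 + (l * (θ - 0)) ^ 2)) := by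
        rw [lintegral_const_mul' _ _ ENNReal.ofReal_ne_top]
        exact mul_le_mul_right (setLIntegral_le_lintegral _ _) _
    _ = _ := by
        rw [lint_cauchy hl0, ← ENNReal.ofReal_mul (by positivity)]
        congr 1; ring

lemma mm_tail {α β : ℝ} (σ : ℝ) (hα : 0 < α) (hβ : 0 < β) {s : ℝ} (hs : 0 < s) (hs1 : s < 1) :
    ∃ c : ℝ, 0 < c ∧ ∀ n, c * s ^ n ≤ mm α β σ n := by
  have hi : IntegrableOn (fun u => Wf α β σ u) (Ioo 0 1) := by
    simpa using intg_pow σ hα hβ 0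
  have hsub : Ioo s 1 ⊆ Ioo (0:ℝ) 1 := Ioo_subset_Ioo_left hs.le
  refine ⟨∫ u in Ioo s 1, Wf α β σ u, ?_, fun n => ?_⟩
  · rw [setIntegral_pos_iff_support_of_nonneg_ae]
    · have : (Function.support fun u => Wf α β σ u) ∩ Ioo s 1 = Ioo s 1 := by
        apply inter_eq_right.mpr
        intro u hu
        exact (Wf_pos hu.2).ne'
      rw [this]; simp [hs1]
    · exact (ae_restrict_iff' measurableSet_Ioo).mpr (Filter.Eventually.of_forall fun u hu => (Wf_pos hu.2).le)
    · exact hi.mono_set hsub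
  · have h1 := intg_pow σ hα hβ n
    calc _ = ∫ u in Ioo s 1, s ^ n * Wf α β σ u := by rw [integral_const_mul, mul_comm]
      _ ≤ ∫ u in Ioo s 1, u ^ n * Wf α β σ u := by
        refine setIntegral_mono_on ((hi.mono_set hsub).const_mul _) (h1.mono_set hsub) measurableSet_Ioo fun u hu => ?_
        exact mul_le_mul_of_nonneg_right (pow_le_pow_left₀ hs.le hu.1.le n) (Wf_pos hu.2).le
      _ ≤ _ := by
        refine setIntegral_mono_set h1 ?_ (Filter.Eventually.of_forall hsub)
        refine (ae_restrict_iff' measurableSet_Ioo).mpr (Filter.Eventually.of_forall fun u hu => ?_)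
        have := (Wf_pos (α := α) (β := β) (σ := σ) hu.2).le
        have := hu.1.le
        simp only [Pi.zero_apply]
        positivity

lemma coef_summable {α β : ℝ} (σ : ℝ) (hα : 0 < α) (hβ : 0 < β) {ρ : ℝ} (h0 : 0 ≤ ρ) (h1 : ρ < 1) :
    Summable fun n : ℕ => ρ ^ n / mm α β σ n := by
  have hs : ρ < (ρ + 1) / 2 := by linarith
  obtain ⟨c, hc, h⟩ := mm_tail σ hα hβ (s := (ρ + 1) / 2) (by linarith) (by linarith)
  set s := (ρ + 1) / 2
  have hs0 : 0 < s := by linarith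
  have hg := (summable_geometric_of_lt_one (div_nonneg h0 hs0.le) ((div_lt_one hs0).mpr hs)).mul_left c⁻¹
  refine Summable.of_nonneg_of_le (fun n => ?_) (fun n => ?_) hg
  · have := mm_pos σ hα hβ n
    positivity
  · calc _ ≤ ρ ^ n / (c * s ^ n) := by have := h n; gcongr
      _ = _ := by clear_value s; rw [div_pow]; field_simp

lemma kernel_bound {α β : ℝ} (σ γ : ℝ) (hα : 0 < α) (hβ : 0 < β) :
    ∃ C : ℝ, 0 < C ∧ ∀ x : ℝ, 0 ≤ x → x < 1 →
    ∫⁻ y in Ioo (0:ℝ) 1, ∫⁻ θ in Ioo (-Real.pi) Real.pi, ENNReal.ofReal (Vf α β γ x * Gf α β σ γ y *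
      ‖Fs (fun n => √(x * y) ^ n / mm α β σ n) θ‖) ≤ ENNReal.ofReal C := by
  obtain ⟨C, hC, h⟩ := S_bound σ γ hα hβ
  have hpi := Real.pi_pos
  refine ⟨2 * Real.pi * C + Real.pi ^ 2 / 2 * Real.pi, by positivity, fun x hx0 hx1 => ?_⟩
  have hδx : 0 < 1 - x := by linarith
  have htx := tau_pos (β := β) hδx
  specialize h x hx0 hx1
  set t := tau β (1 - x)
  set Sf : ℝ → ℝ≥0∞ := fun y => ENNReal.ofReal (Vf α β γ x ^ 2 * Gf α β σ γ y ^ 2 *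
      (1 + ((x - y) / t) ^ 2)) *
      (ENNReal.ofReal ((1 / mm α β σ 0) ^ 2) +
        ∑' n : ℕ, ENNReal.ofReal (t ^ 2 * (√(x * y) ^ n / mm α β σ n) ^ 2 +
        (√(x * y) ^ (n + 1) / mm α β σ (n + 1) - √(x * y) ^ n / mm α β σ n) ^ 2)) with hSf
  have hpt : ∀ y ∈ Ioo (0:ℝ) 1, ∫⁻ θ in Ioo (-Real.pi) Real.pi, ENNReal.ofReal (Vf α β γ x * Gf α β σ γ y *
      ‖Fs (fun n => √(x * y) ^ n / mm α β σ n) θ‖) ≤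
      ENNReal.ofReal (2 * Real.pi) * Sf y + ENNReal.ofReal (Real.pi ^ 2 / 2) *
        ENNReal.ofReal (t⁻¹ / (1 + (t⁻¹ * (y - x)) ^ 2)) := by
    intro y hy
    have hV := Vf_pos (α := α) (β := β) (γ := γ) hx1
    have hG := Gf_pos (α := α) (β := β) (σ := σ) (γ := γ) hy.2
    set c : ℕ → ℝ := fun n => √(x * y) ^ n / mm α β σ n with hcd
    have hρ : √(x * y) < 1 := by
      rw [Real.sqrt_lt' one_pos]
      nlinarith [hy.1, hy.2]
    have hc : Summable fun n => |c n| := (coef_summable σ hα hβ (Real.sqrt_nonneg _) hρ).abs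
    set X := (x - y) / t with hX
    have hpw : ∀ θ : ℝ, ENNReal.ofReal (Vf α β γ x * Gf α β σ γ y * ‖Fs c θ‖) ≤
        ENNReal.ofReal (Vf α β γ x ^ 2 * Gf α β σ γ y ^ 2 * (1 + X ^ 2)) *
          ENNReal.ofReal (‖Fs c θ‖ ^ 2 * (t ^ 2 + ‖1 - Complex.exp (I * θ)‖ ^ 2)) +
        ENNReal.ofReal (1 / (1 + X ^ 2)) * ENNReal.ofReal (1 / (t ^ 2 + ‖1 - Complex.exp (I * θ)‖ ^ 2)) := by
      intro θ
      rw [← ENNReal.ofReal_mul (by positivity), ← ENNReal.ofReal_mul (by positivity),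
        ← ENNReal.ofReal_add (by positivity) (by positivity)]
      apply ENNReal.ofReal_le_ofReal
      set a := Vf α β γ x * Gf α β σ γ y * ‖Fs c θ‖ with ha
      have ha0 : 0 ≤ a := by positivity
      have hQ : 0 < (1 + X ^ 2) * (t ^ 2 + ‖1 - Complex.exp (I * θ)‖ ^ 2) := by positivity
      set Q := (1 + X ^ 2) * (t ^ 2 + ‖1 - Complex.exp (I * θ)‖ ^ 2) with hQd
      have e1 : Vf α β γ x ^ 2 * Gf α β σ γ y ^ 2 * (1 + X ^ 2) *
        (‖Fs c θ‖ ^ 2 * (t ^ 2 + ‖1 - Complex.exp (I * θ)‖ ^ 2)) = a ^ 2 * Q := by rw [ha, hQd]; ring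
      have e2 : 1 / (1 + X ^ 2) * (1 / (t ^ 2 + ‖1 - Complex.exp (I * θ)‖ ^ 2)) = 1 / Q := by
        rw [hQd, one_div_mul_one_div]
      rw [e1, e2]
      have : a ^ 2 * Q + 1 / Q - 2 * a = (a * Q - 1) ^ 2 / Q := by field_simp; ring
      have h3 : 0 ≤ (a * Q - 1) ^ 2 / Q := by positivity
      linarith
    have hmeas : Measurable fun θ : ℝ => ENNReal.ofReal (1 / (1 + X ^ 2)) *
        ENNReal.ofReal (1 / (t ^ 2 + ‖1 - Complex.exp (I * θ)‖ ^ 2)) := by fun_prop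
    calc _ ≤ ∫⁻ θ in Ioo (-Real.pi) Real.pi, (ENNReal.ofReal (Vf α β γ x ^ 2 * Gf α β σ γ y ^ 2 * (1 + X ^ 2)) *
          ENNReal.ofReal (‖Fs c θ‖ ^ 2 * (t ^ 2 + ‖1 - Complex.exp (I * θ)‖ ^ 2)) +
        ENNReal.ofReal (1 / (1 + X ^ 2)) * ENNReal.ofReal (1 / (t ^ 2 + ‖1 - Complex.exp (I * θ)‖ ^ 2))) :=
          lintegral_mono hpw
      _ ≤ ENNReal.ofReal (Vf α β γ x ^ 2 * Gf α β σ γ y ^ 2 * (1 + X ^ 2)) *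
          (ENNReal.ofReal (2 * Real.pi) * (ENNReal.ofReal (c 0 ^ 2) +
      ∑' n, ENNReal.ofReal (t ^ 2 * c n ^ 2 + (c (n + 1) - c n) ^ 2))) +
          ENNReal.ofReal (1 / (1 + X ^ 2)) * ENNReal.ofReal (Real.pi ^ 2 / (2 * t)) := by
          rw [lintegral_add_right _ hmeas, lintegral_const_mul' _ _ ENNReal.ofReal_ne_top,
            lintegral_const_mul' _ _ ENNReal.ofReal_ne_top]
          exact add_le_add (mul_le_mul_right (weighted_parseval hc t) _) (mul_le_mul_right (chord_int htx) _)
      _ = _ := by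
          congr 1
          · rw [mul_left_comm]
            simp only [hSf, hcd, pow_zero, hX]
          · rw [← ENNReal.ofReal_mul (by positivity), ← ENNReal.ofReal_mul (by positivity)]
            congr 1
            have : (t⁻¹ * (y - x)) ^ 2 = X ^ 2 := by rw [hX]; field_simp; ring
            rw [this]; field_simp
  calc _ ≤ ∫⁻ y in Ioo (0:ℝ) 1, (ENNReal.ofReal (2 * Real.pi) * Sf y + ENNReal.ofReal (Real.pi ^ 2 / 2) *
        ENNReal.ofReal (t⁻¹ / (1 + (t⁻¹ * (y - x)) ^ 2))) := setLIntegral_mono' measurableSet_Ioo hpt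
    _ = ENNReal.ofReal (2 * Real.pi) * (∫⁻ y in Ioo (0:ℝ) 1, Sf y) + ENNReal.ofReal (Real.pi ^ 2 / 2) *
        ∫⁻ y in Ioo (0:ℝ) 1, ENNReal.ofReal (t⁻¹ / (1 + (t⁻¹ * (y - x)) ^ 2)) := by
        rw [lintegral_add_right _ (by fun_prop), lintegral_const_mul' _ _ ENNReal.ofReal_ne_top,
            lintegral_const_mul' _ _ ENNReal.ofReal_ne_top]
    _ ≤ ENNReal.ofReal (2 * Real.pi) * ENNReal.ofReal C + ENNReal.ofReal (Real.pi ^ 2 / 2) *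
        ENNReal.ofReal Real.pi := by
        refine add_le_add (mul_le_mul_right h _) (mul_le_mul_right ?_ _)
        rw [← lint_cauchy (inv_pos.mpr htx) x]
        exact setLIntegral_le_lintegral _ _
    _ = _ := by
        rw [← ENNReal.ofReal_mul (by positivity), ← ENNReal.ofReal_mul (by positivity),
        ← ENNReal.ofReal_add (by positivity) (by positivity)]

/-- The weight, as a function of the modulus. -/
def om (α β σ : ℝ) : ℝ → ℝ := fun s => (1 - s ^ 2) ^ (2 * σ) *
            Real.exp (-(2 * α) / (1 - s ^ 2) ^ β)

lemma om_eq (α β σ s : ℝ) : om α β σ s = Wf α β σ (s ^ 2) := rfl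

lemma sq_image : (fun s : ℝ => s ^ 2) '' Ioo (0:ℝ) 1 = Ioo (0:ℝ) 1 := by
  ext y
  constructor
  · rintro ⟨s, hs, rfl⟩
    have h1 := hs.1
    have h2 := hs.2
    exact ⟨by positivity, by simp only; nlinarith⟩
  · intro hy
    refine ⟨√y, ⟨Real.sqrt_pos.mpr hy.1, ?_⟩, Real.sq_sqrt hy.1.le⟩
    rw [Real.sqrt_lt' one_pos]; simpa using hy.2

lemma sq_injOn : InjOn (fun s : ℝ => s ^ 2) (Ioo (0:ℝ) 1) := by
  intro a ha b hb h
  exact (pow_left_inj₀ ha.1.le hb.1.le two_ne_zero).mp h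

lemma sq_deriv (x : ℝ) (s : Set ℝ) : HasDerivWithinAt (fun s : ℝ => s ^ 2) (2 * x) s x := by
  simpa using (hasDerivAt_pow 2 x).hasDerivWithinAt

lemma mom_eq (α β σ : ℝ) (n : ℕ) : 2 * mom (om α β σ) (2 * (n : ℝ) + 1) = mm α β σ n := by
  unfold mom mm
  conv_rhs => rw [← sq_image]
  rw [integral_image_eq_integral_abs_deriv_smul measurableSet_Ioo (fun x _ => sq_deriv x _) sq_injOn,
    intervalIntegral.integral_of_le zero_le_one, integral_Ioc_eq_integral_Ioo, ← integral_const_mul]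
  refine setIntegral_congr_fun measurableSet_Ioo fun s hs => ?_
  simp only [om_eq]
  have : s ^ (2 * (n:ℝ) + 1) = s ^ (2 * n + 1) := by
    rw [← Real.rpow_natCast]; push_cast; rfl
  rw [this, abs_of_pos (by have := hs.1; positivity), smul_eq_mul]
  ring

/-- The one-variable kernel. -/
def KK (α β σ : ℝ) (w : ℂ) : ℂ := ∑' n : ℕ, w ^ n / ((mm α β σ n : ℝ) : ℂ)

lemma bKer_eq (α β σ : ℝ) (z ζ : ℂ) : bKer (om α β σ) z ζ = KK α β σ (starRingEnd ℂ z * ζ) := by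
  unfold bKer KK
  simp_rw [mom_eq]

lemma KK_polar (α β σ : ℝ) {a r : ℝ} (ha : 0 ≤ a) (hr : 0 ≤ r) (θ : ℝ) :
    KK α β σ ((a : ℂ) * (r * (Real.cos θ + Real.sin θ * I))) =
      Fs (fun n => √(a ^ 2 * r ^ 2) ^ n / mm α β σ n) θ := by
  unfold KK Fs
  refine tsum_congr fun n => ?_
  have e1 : √(a ^ 2 * r ^ 2) = a * r := by
    rw [← mul_pow, Real.sqrt_sq (by positivity)]
  have e2 : ((Real.cos θ : ℂ) + Real.sin θ * I) = Complex.exp (I * θ) := by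
    rw [mul_comm I, Complex.exp_mul_I]; push_cast; rfl
  rw [e1, e2]; push_cast; ring

lemma area_bound {α β : ℝ} (σ γ : ℝ) (hα : 0 < α) (hβ : 0 < β) :
    ∃ C : ℝ, 0 < C ∧ ∀ z ∈ unitDisc,
    ∫⁻ ζ in unitDisc, ENNReal.ofReal (Vf α β γ (‖z‖ ^ 2) * Gf α β σ γ (‖ζ‖ ^ 2) *
      ‖KK α β σ (starRingEnd ℂ z * ζ)‖) ≤ ENNReal.ofReal C := by
  obtain ⟨C, hC, h⟩ := kernel_bound σ γ hα hβ
  refine ⟨C, hC, fun z hz => ?_⟩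
  have hz1 : ‖z‖ < 1 := by simpa [unitDisc] using hz
  have hdm : MeasurableSet unitDisc := by unfold unitDisc; exact measurableSet_ball
  specialize h (‖z‖ ^ 2) (by positivity) (by nlinarith [norm_nonneg z])
  set V := Vf α β γ (‖z‖ ^ 2)
  set u : Circle := Circle.exp (Complex.arg z) with hu
  have hzu : starRingEnd ℂ z * (u : ℂ) = (‖z‖ : ℂ) := by
    have e : z = ‖z‖ * (u : ℂ) := by
      rw [hu, Circle.coe_exp]; exact (Complex.norm_mul_exp_arg_mul_I z).symm
    conv_lhs => rw [e]
    rw [map_mul, Complex.conj_ofReal, mul_assoc, mul_comm (starRingEnd ℂ (u : ℂ)), Complex.mul_conj]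
    simp
  set g : ℂ → ℝ≥0∞ := unitDisc.indicator (fun ζ => ENNReal.ofReal (V * Gf α β σ γ (‖ζ‖ ^ 2) *
      ‖KK α β σ (starRingEnd ℂ z * ζ)‖)) with hg
  have hrot : ∫⁻ ζ, g ζ = ∫⁻ ζ, g (rotation u ζ) :=
    ((rotation u).measurePreserving.lintegral_comp_emb
      (rotation u).toHomeomorph.measurableEmbedding g).symm
  have hgr : ∀ ζ, g (rotation u ζ) = unitDisc.indicator (fun ζ => ENNReal.ofReal (V * Gf α β σ γ (‖ζ‖ ^ 2) *
      ‖KK α β σ (‖z‖ * ζ)‖)) ζ := by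
    intro ζ
    have hn : ‖rotation u ζ‖ = ‖ζ‖ := (rotation u).norm_map ζ
    by_cases hζ : ζ ∈ unitDisc
    · have hζ2 : rotation u ζ ∈ unitDisc := by
        unfold unitDisc at hζ ⊢; rw [mem_ball_zero_iff] at hζ ⊢; rwa [hn]
      rw [hg, indicator_of_mem hζ, indicator_of_mem hζ2, hn, rotation_apply, ← mul_assoc, hzu]
    · have hζ2 : rotation u ζ ∉ unitDisc := by
        unfold unitDisc at hζ ⊢; rw [mem_ball_zero_iff] at hζ ⊢; rwa [hn]
      rw [hg, indicator_of_notMem hζ, indicator_of_notMem hζ2]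
  rw [← lintegral_indicator hdm, ← hg, hrot]
  simp_rw [hgr]
  set k : ℂ → ℝ≥0∞ := unitDisc.indicator (fun ζ => ENNReal.ofReal (V * Gf α β σ γ (‖ζ‖ ^ 2) *
      ‖KK α β σ (‖z‖ * ζ)‖)) with hk
  set H : ℝ → ℝ≥0∞ := fun y => ∫⁻ θ in Ioo (-Real.pi) Real.pi, ENNReal.ofReal (V * Gf α β σ γ y *
      ‖Fs (fun n => √(‖z‖ ^ 2 * y) ^ n / mm α β σ n) θ‖) with hH
  have hpt : ∀ r ∈ Ioi (0:ℝ), ∫⁻ θ in Ioo (-Real.pi) Real.pi, ENNReal.ofReal r •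
      k (Complex.polarCoord.symm (r, θ)) ≤
      (Ioo (0:ℝ) 1).indicator (fun r => ENNReal.ofReal |2 * r| * H (r ^ 2)) r := by
    intro r hr
    have hr0 : (0:ℝ) < r := hr
    have hnr : ∀ θ, ‖Complex.polarCoord.symm (r, θ)‖ = r := by
      intro θ; rw [Complex.norm_polarCoord_symm]; exact abs_of_pos hr0
    by_cases hr1 : r < 1
    · rw [indicator_of_mem (show r ∈ Ioo (0:ℝ) 1 from ⟨hr0, hr1⟩)]
      have e : ∀ θ, k (Complex.polarCoord.symm (r, θ)) = ENNReal.ofReal (V * Gf α β σ γ (r ^ 2) *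
        ‖Fs (fun n => √(‖z‖ ^ 2 * r ^ 2) ^ n / mm α β σ n) θ‖) := by
        intro θ
        have hm : Complex.polarCoord.symm (r, θ) ∈ unitDisc := by
          unfold unitDisc; rw [mem_ball_zero_iff, hnr]; exact hr1
        rw [hk, indicator_of_mem hm, hnr, Complex.polarCoord_symm_apply,
          KK_polar α β σ (norm_nonneg z) hr0.le]
      simp_rw [e, smul_eq_mul]
      rw [lintegral_const_mul' _ _ ENNReal.ofReal_ne_top]
      refine mul_le_mul_left (ENNReal.ofReal_le_ofReal ?_) _
      rw [abs_of_pos (by positivity)]; linarith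
    · have e : ∀ θ, k (Complex.polarCoord.symm (r, θ)) = 0 := by
        intro θ
        have hm : Complex.polarCoord.symm (r, θ) ∉ unitDisc := by
          unfold unitDisc; rw [mem_ball_zero_iff, hnr]; exact hr1
        rw [hk, indicator_of_notMem hm]
      simp_rw [e]; simp
  calc ∫⁻ ζ, k ζ = ∫⁻ p in polarCoord.target, ENNReal.ofReal p.1 • k (Complex.polarCoord.symm p) :=
        (Complex.lintegral_comp_polarCoord_symm k).symm
    _ ≤ ∫⁻ r in Ioi (0:ℝ), ∫⁻ θ in Ioo (-Real.pi) Real.pi, ENNReal.ofReal r •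
          k (Complex.polarCoord.symm (r, θ)) := by
        rw [polarCoord_target, Measure.volume_eq_prod, ← Measure.prod_restrict]
        exact lintegral_prod_le _
    _ ≤ ∫⁻ r in Ioi (0:ℝ), (Ioo (0:ℝ) 1).indicator (fun r => ENNReal.ofReal |2 * r| * H (r ^ 2)) r :=
        setLIntegral_mono' measurableSet_Ioi hpt
    _ ≤ ∫⁻ r, (Ioo (0:ℝ) 1).indicator (fun r => ENNReal.ofReal |2 * r| * H (r ^ 2)) r :=
        setLIntegral_le_lintegral _ _
    _ = ∫⁻ r in Ioo (0:ℝ) 1, ENNReal.ofReal |2 * r| * H (r ^ 2) := lintegral_indicator measurableSet_Ioo _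
    _ = ∫⁻ y in Ioo (0:ℝ) 1, H y := by
        conv_rhs => rw [← sq_image]
        rw [lintegral_image_eq_lintegral_abs_deriv_mul measurableSet_Ioo (fun x _ => sq_deriv x _) sq_injOn]
    _ ≤ _ := h

lemma KK_diff {α β : ℝ} (σ : ℝ) (hα : 0 < α) (hβ : 0 < β) :
    DifferentiableOn ℂ (KK α β σ) (Metric.ball 0 1) := by
  intro w hw
  rw [mem_ball_zero_iff] at hw
  obtain ⟨r, hr1, hr2⟩ := exists_between hw
  have hr0 : 0 ≤ r := (norm_nonneg w).trans hr1.le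
  have h := differentiableOn_tsum_of_summable_norm (F := fun (n : ℕ) (w : ℂ) => w ^ n / ((mm α β σ n : ℝ) : ℂ))
    (U := Metric.ball 0 r) (coef_summable σ hα hβ hr0 hr2) (fun n => by fun_prop) Metric.isOpen_ball
    (fun n w hw => by
      rw [mem_ball_zero_iff] at hw
      have hm := mm_pos σ hα hβ n
      rw [norm_div, norm_pow, Complex.norm_real, Real.norm_eq_abs, abs_of_pos hm]
      gcongr)
  exact ((h w (by rwa [mem_ball_zero_iff])).differentiableAt
    (Metric.isOpen_ball.mem_nhds (by rwa [mem_ball_zero_iff]))).differentiableWithinAt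

lemma KK_conj (α β σ : ℝ) (w : ℂ) : starRingEnd ℂ (KK α β σ w) = KK α β σ (starRingEnd ℂ w) := by
  unfold KK
  rw [Complex.conj_tsum]
  refine tsum_congr fun n => ?_
  simp

lemma KK_bdd {α β : ℝ} (σ : ℝ) (hα : 0 < α) (hβ : 0 < β) {r : ℝ} (hr : r < 1) :
    ∃ M : ℝ, ∀ w : ℂ, ‖w‖ ≤ r → ‖KK α β σ w‖ ≤ M ∧ ‖deriv (KK α β σ) w‖ ≤ M := by
  have hsub : Metric.closedBall (0:ℂ) r ⊆ Metric.ball 0 1 := Metric.closedBall_subset_ball hr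
  have h1 := KK_diff σ hα hβ
  have h2 := h1.deriv Metric.isOpen_ball
  obtain ⟨M1, hM1⟩ := (isCompact_closedBall (0:ℂ) r).exists_bound_of_continuousOn (h1.continuousOn.mono hsub)
  obtain ⟨M2, hM2⟩ := (isCompact_closedBall (0:ℂ) r).exists_bound_of_continuousOn (h2.continuousOn.mono hsub)
  refine ⟨max M1 M2, fun w hw => ?_⟩
  have hw' : w ∈ Metric.closedBall (0:ℂ) r := by rwa [mem_closedBall_zero_iff]
  exact ⟨(hM1 w hw').trans (le_max_left _ _), (hM2 w hw').trans (le_max_right _ _)⟩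

lemma Wf_eq_mul {α β σ γ u : ℝ} (hu : u < 1) : Wf α β σ u = Vf α β γ u * Gf α β σ γ u := by
  unfold Gf; rw [mul_div_cancel₀ _ (Vf_pos hu).ne']

lemma bInt_eq (α β σ : ℝ) (f : ℂ → ℂ) (z ζ : ℂ) : bInt (om α β σ) f z ζ =
    f ζ * ((Wf α β σ (‖ζ‖ ^ 2) : ℝ) : ℂ) * KK α β σ (z * starRingEnd ℂ ζ) := by
  unfold bInt
  rw [bKer_eq, KK_conj, om_eq]
  simp only [map_mul, Complex.conj_conj]
  ring

lemma main_thm (α β σ γ : ℝ) (hα : 0 < α) (hβ : 0 < β) :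
    ∃ C : ℝ, 0 < C ∧ ∀ f : ℂ → ℂ,
      AEStronglyMeasurable f (volume.restrict unitDisc) →
      (∀ z ∈ unitDisc, ‖f z‖ * Vf α β γ (‖z‖ ^ 2) ≤ 1) →
      (∀ z ∈ unitDisc, IntegrableOn (bInt (om α β σ) f z) unitDisc) ∧
      DifferentiableOn ℂ (bProj (om α β σ) f) unitDisc ∧
      ∀ z ∈ unitDisc, ‖bProj (om α β σ) f z‖ * Vf α β γ (‖z‖ ^ 2) ≤ C := by
  obtain ⟨C, hC, hA⟩ := area_bound σ γ hα hβ
  obtain ⟨D, hD, hG⟩ := Gf_sq_bdd σ γ hα hβ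
  have hpi := Real.pi_pos
  refine ⟨Real.pi⁻¹ * C, by positivity, fun f hf hfb => ?_⟩
  have hdm : MeasurableSet unitDisc := by unfold unitDisc; exact measurableSet_ball
  have hn : ∀ {z : ℂ}, z ∈ unitDisc → ‖z‖ < 1 := fun hz => by simpa [unitDisc] using hz
  have hn2 : ∀ {z : ℂ}, z ∈ unitDisc → ‖z‖ ^ 2 < 1 := fun {z} hz => by
    have := hn hz; nlinarith [norm_nonneg z]
  have hfin : volume unitDisc ≠ ⊤ := by unfold unitDisc; exact measure_ball_lt_top.ne
  set h : ℂ → ℂ := fun ζ => f ζ * ((Wf α β σ (‖ζ‖ ^ 2) : ℝ) : ℂ) with hh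
  have hhm : AEStronglyMeasurable h (volume.restrict unitDisc) := by
    refine hf.mul ?_
    have : Measurable fun ζ : ℂ => ((Wf α β σ (‖ζ‖ ^ 2) : ℝ) : ℂ) := by
      have := Wf_meas α β σ
      fun_prop
    exact this.aestronglyMeasurable
  have hhG : ∀ ζ ∈ unitDisc, ‖h ζ‖ ≤ Gf α β σ γ (‖ζ‖ ^ 2) := by
    intro ζ hζ
    have h1 := hn2 hζ
    have hg := Gf_pos (α := α) (β := β) (σ := σ) (γ := γ) h1
    rw [hh]
    simp only
    rw [norm_mul, Complex.norm_real, Real.norm_eq_abs, abs_of_pos (Wf_pos h1), Wf_eq_mul (γ := γ) h1, ← mul_assoc]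
    calc _ ≤ 1 * Gf α β σ γ (‖ζ‖ ^ 2) := mul_le_mul_of_nonneg_right (hfb ζ hζ) hg.le
      _ = _ := one_mul _
  have hhD : ∀ ζ ∈ unitDisc, ‖h ζ‖ ≤ √D := fun ζ hζ => (hhG ζ hζ).trans
    (Real.le_sqrt_of_sq_le (hG _ (by positivity) (hn2 hζ)))
  have hbi : ∀ z ζ, bInt (om α β σ) f z ζ = h ζ * KK α β σ (z * starRingEnd ℂ ζ) := fun z ζ => bInt_eq _ _ _ _ _ _
  clear_value h
  have hzζ : ∀ {z ζ : ℂ}, ζ ∈ unitDisc → ‖z * starRingEnd ℂ ζ‖ ≤ ‖z‖ := by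
    intro z ζ hζ
    rw [norm_mul, RCLike.norm_conj]
    exact mul_le_of_le_one_right (norm_nonneg _) (hn hζ).le
  have hKd := KK_diff σ hα hβ
  have hconj : Continuous fun ζ : ℂ => starRingEnd ℂ ζ := Complex.continuous_conj
  have hmeas : ∀ z ∈ unitDisc, AEStronglyMeasurable (bInt (om α β σ) f z) (volume.restrict unitDisc) := by
    intro z hz
    have : bInt (om α β σ) f z = fun ζ => h ζ * KK α β σ (z * starRingEnd ℂ ζ) := funext (hbi z)
    rw [this]
    refine hhm.mul ?_
    refine ContinuousOn.aestronglyMeasurable ?_ hdm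
    refine hKd.continuousOn.comp (by fun_prop) fun ζ hζ => ?_
    rw [mem_ball_zero_iff]
    exact (hzζ hζ).trans_lt (hn hz)
  have hintg : ∀ z ∈ unitDisc, IntegrableOn (bInt (om α β σ) f z) unitDisc := by
    intro z hz
    obtain ⟨M, hM⟩ := KK_bdd σ hα hβ (hn hz)
    haveI : IsFiniteMeasure (volume.restrict unitDisc) := by
      rw [isFiniteMeasure_restrict]; exact hfin
    refine ⟨hmeas z hz, HasFiniteIntegral.of_bounded (C := √D * M) ?_⟩
    refine (ae_restrict_iff' hdm).mpr (Filter.Eventually.of_forall fun ζ hζ => ?_)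
    rw [hbi, norm_mul]
    exact mul_le_mul (hhD ζ hζ) (hM _ (hzζ hζ)).1 (norm_nonneg _) (Real.sqrt_nonneg _)
  refine ⟨hintg, ?_, ?_⟩
  · intro z hz
    obtain ⟨r, hr1, hr2⟩ := exists_between (hn hz)
    obtain ⟨M, hM⟩ := KK_bdd σ hα hβ hr2
    have hball : Metric.ball (0:ℂ) r ∈ nhds z := Metric.isOpen_ball.mem_nhds (by rwa [mem_ball_zero_iff])
    have hder := hasDerivAt_integral_of_dominated_loc_of_deriv_le (μ := volume.restrict unitDisc)
      (F := fun z ζ => bInt (om α β σ) f z ζ)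
      (F' := fun z ζ => h ζ * (deriv (KK α β σ) (z * starRingEnd ℂ ζ) * starRingEnd ℂ ζ))
      (x₀ := z) (bound := fun _ => √D * (M * 1)) hball ?_ (hintg z hz) ?_ ?_ ?_ ?_
    · have := hder.2.differentiableAt.const_mul (Real.pi : ℂ)⁻¹
      exact this.differentiableWithinAt
    · filter_upwards [hball] with w hw
      rw [mem_ball_zero_iff] at hw
      exact hmeas w (by unfold unitDisc; rw [mem_ball_zero_iff]; linarith)
    · refine hhm.mul ?_
      have : Measurable fun ζ : ℂ => deriv (KK α β σ) (z * starRingEnd ℂ ζ) * starRingEnd ℂ ζ := by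
        have h1 := measurable_deriv (KK α β σ)
        have h2 := hconj.measurable
        exact (h1.comp (h2.const_mul z)).mul h2
      exact this.aestronglyMeasurable
    · refine (ae_restrict_iff' hdm).mpr (Filter.Eventually.of_forall fun ζ hζ w hw => ?_)
      rw [mem_ball_zero_iff] at hw
      rw [norm_mul, norm_mul, RCLike.norm_conj]
      have h1 := (hM _ ((hzζ (z := w) hζ).trans hw.le)).2
      have h2 := (hn hζ).le
      have h3 := hhD ζ hζ
      have hM0 : 0 ≤ M := (norm_nonneg _).trans h1
      gcongr
    · exact integrable_const_iff.mpr (Or.inr (by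
        rw [isFiniteMeasure_restrict]; exact hfin))
    · refine (ae_restrict_iff' hdm).mpr (Filter.Eventually.of_forall fun ζ hζ w hw => ?_)
      rw [mem_ball_zero_iff] at hw
      simp only [hbi]
      refine HasDerivAt.const_mul _ ?_
      have hmem : w * starRingEnd ℂ ζ ∈ Metric.ball (0:ℂ) 1 := by
        rw [mem_ball_zero_iff]; exact (hzζ hζ).trans_lt (hw.trans hr2)
      have h1 := (hKd.differentiableAt (Metric.isOpen_ball.mem_nhds hmem)).hasDerivAt
      have h2 : HasDerivAt (fun w : ℂ => w * starRingEnd ℂ ζ) (starRingEnd ℂ ζ) w := by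
        simpa using (hasDerivAt_id w).mul_const (starRingEnd ℂ ζ)
      exact h1.comp w h2
  · intro z hz
    have hV := Vf_pos (α := α) (β := β) (γ := γ) (hn2 hz)
    have hle : ENNReal.ofReal (‖∫ ζ in unitDisc, bInt (om α β σ) f z ζ‖ * Vf α β γ (‖z‖ ^ 2)) ≤
        ENNReal.ofReal C := by
      rw [ENNReal.ofReal_mul (norm_nonneg _), ofReal_norm]
      calc _ ≤ (∫⁻ ζ in unitDisc, ‖bInt (om α β σ) f z ζ‖ₑ) * ENNReal.ofReal (Vf α β γ (‖z‖ ^ 2)) :=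
            mul_le_mul_left (enorm_integral_le_lintegral_enorm _) _
        _ = ∫⁻ ζ in unitDisc, ‖bInt (om α β σ) f z ζ‖ₑ * ENNReal.ofReal (Vf α β γ (‖z‖ ^ 2)) :=
            (lintegral_mul_const' _ _ ENNReal.ofReal_ne_top).symm
        _ ≤ _ := by
            refine (setLIntegral_mono' hdm fun ζ hζ => ?_).trans (hA z hz)
            rw [← ofReal_norm, ← ENNReal.ofReal_mul (norm_nonneg _)]
            apply ENNReal.ofReal_le_ofReal
            have e : ‖KK α β σ (z * starRingEnd ℂ ζ)‖ = ‖KK α β σ (starRingEnd ℂ z * ζ)‖ := by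
              rw [← RCLike.norm_conj (KK α β σ (starRingEnd ℂ z * ζ))]
              have := KK_conj α β σ (starRingEnd ℂ z * ζ)
              rw [map_mul, Complex.conj_conj] at this
              rw [← this]
            rw [hbi, norm_mul, e]
            have := hhG ζ hζ
            calc _ = Vf α β γ (‖z‖ ^ 2) * ‖h ζ‖ * ‖KK α β σ (starRingEnd ℂ z * ζ)‖ := by ring
              _ ≤ _ := by gcongr
    rw [ENNReal.ofReal_le_ofReal_iff hC.le] at hle
    unfold bProj
    rw [norm_mul, norm_inv, Complex.norm_real, Real.norm_eq_abs, abs_of_pos hpi, mul_assoc]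
    gcongr

/-- Proposition: for `v(z) = (1-|z|²)^γ e^{-α/(1-|z|²)^β}` and
`ω(z) = (1-|z|²)^{2σ} e^{-2α/(1-|z|²)^β}`, the projection
`P_ω : L^∞_v → H^∞_v` is bounded. -/
theorem stmt7 (α β σ γ : ℝ) (hα : 0 < α) (hβ : 0 < β) :
    ∃ C : ℝ, 0 < C ∧ ∀ f : ℂ → ℂ,
      AEStronglyMeasurable f (volume.restrict unitDisc) →
      (∀ z ∈ unitDisc,
        ‖f z‖ * ((1 - ‖z‖ ^ 2) ^ γ * Real.exp (-α / (1 - ‖z‖ ^ 2) ^ β)) ≤ 1) →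
      (∀ z ∈ unitDisc,
        IntegrableOn
          (bInt (fun s => (1 - s ^ 2) ^ (2 * σ) *
            Real.exp (-(2 * α) / (1 - s ^ 2) ^ β)) f z) unitDisc) ∧
      DifferentiableOn ℂ
        (bProj (fun s => (1 - s ^ 2) ^ (2 * σ) *
          Real.exp (-(2 * α) / (1 - s ^ 2) ^ β)) f) unitDisc ∧
      ∀ z ∈ unitDisc,
        ‖bProj (fun s => (1 - s ^ 2) ^ (2 * σ) *
            Real.exp (-(2 * α) / (1 - s ^ 2) ^ β)) f z‖ *
          ((1 - ‖z‖ ^ 2) ^ γ * Real.exp (-α / (1 - ‖z‖ ^ 2) ^ β)) ≤ C := by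
  exact main_thm α β σ γ hα hβ
end
end

section
/- Let ω and ν be radial weights such that P_ω : L^∞_ν̂ → H^∞_ν̂ is bounded. If f is a complex-valued harmonic function on 𝔻 belonging to L^∞_ν̂, with series representation f(r e^{iθ}) = Σ_{m=−∞}^∞ f_m r^{|m|} e^{imθ} converging uniformly on compact subsets of 𝔻, then P_ω f(z) = Σ_{n=0}^∞ f_n z^n for every z ∈ 𝔻; that is, the restriction of P_ω to harmonic functions in L^∞_ν̂ coincides with the Szegő projection R. Consequently R is bounded from h^∞_ν̂ (the harmonic functions in L^∞_ν̂) to H^∞_ν̂. -/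
open MeasureTheory Set Complex
open scoped ENNReal

noncomputable section

theorem aux_orth (k : ℤ) :
    ∫ θ in Ioo (-Real.pi) Real.pi, Complex.exp ((k : ℂ) * θ * I) =
      if k = 0 then (2 * Real.pi : ℂ) else 0 := by
  rw [← integral_Ioc_eq_integral_Ioo, ← intervalIntegral.integral_of_le (by linarith [Real.pi_pos])]
  split_ifs with h
  · subst h
    simp
    push_cast
    ring
  · have hk : (k : ℂ) * I ≠ 0 := by simp [h]
    have := integral_exp_mul_complex (a := -Real.pi) (b := Real.pi) hk
    have e : ∀ θ : ℝ, (k : ℂ) * θ * I = (k : ℂ) * I * θ := fun θ => by ring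
    simp_rw [e]
    rw [this, div_eq_zero_iff]
    left
    rw [sub_eq_zero, Complex.exp_eq_exp_iff_exists_int]
    exact ⟨k, by push_cast; ring⟩

def cpt (r θ : ℝ) : ℂ := r * Complex.exp (θ * I)

def hterm (a : ℤ → ℂ) (z : ℂ) (m : ℤ) : ℂ :=
  a m * (if 0 ≤ m then z ^ m.toNat else (starRingEnd ℂ z) ^ (-m).toNat)

theorem norm_cpt {r : ℝ} (hr : 0 ≤ r) (θ : ℝ) : ‖cpt r θ‖ = r := by
  simp [cpt, Complex.norm_exp_ofReal_mul_I, abs_of_nonneg hr]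

theorem hterm_cpt (a : ℤ → ℂ) (r θ : ℝ) (m : ℤ) :
    hterm a (cpt r θ) m = a m * (r : ℂ) ^ m.natAbs * Complex.exp ((m : ℂ) * θ * I) := by
  unfold hterm cpt
  split_ifs with h
  · lift m to ℕ using h
    simp only [Int.toNat_natCast, Int.natAbs_natCast, mul_pow, ← Complex.exp_nat_mul]
    push_cast
    ring_nf
  · obtain ⟨n, rfl⟩ : ∃ n : ℕ, m = -(n : ℤ) := ⟨(-m).toNat, by omega⟩
    simp only [neg_neg, Int.toNat_natCast, Int.natAbs_neg, Int.natAbs_natCast, map_mul,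
      Complex.conj_ofReal, ← Complex.exp_conj, Complex.conj_I, mul_pow, ← Complex.exp_nat_mul]
    push_cast
    ring_nf

theorem norm_hterm_cpt (a : ℤ → ℂ) {r : ℝ} (hr : 0 ≤ r) (θ : ℝ) (m : ℤ) :
    ‖hterm a (cpt r θ) m‖ = ‖a m‖ * r ^ m.natAbs := by
  rw [hterm_cpt]
  have : ((m : ℂ) * θ * I) = ((m * θ : ℝ) : ℂ) * I := by push_cast; ring
  rw [this, norm_mul, Complex.norm_exp_ofReal_mul_I]
  simp [abs_of_nonneg hr]

theorem cpt_mem {r : ℝ} (hr : 0 ≤ r) (hr1 : r < 1) (θ : ℝ) : cpt r θ ∈ unitDisc := by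
  simp [unitDisc, norm_cpt hr, hr1]

section
variable {f : ℂ → ℂ} {a : ℤ → ℂ}

theorem summ_a (hf : ∀ z ∈ unitDisc, HasSum (hterm a z) (f z)) {r : ℝ} (hr : 0 ≤ r) (hr1 : r < 1) :
    Summable fun m : ℤ => ‖a m‖ * r ^ m.natAbs := by
  have := (hf _ (cpt_mem hr hr1 0)).summable.norm
  simpa [norm_hterm_cpt a hr] using this

theorem cont_circ (hf : ∀ z ∈ unitDisc, HasSum (hterm a z) (f z)) {r : ℝ} (hr : 0 ≤ r)
    (hr1 : r < 1) : Continuous fun θ : ℝ => f (cpt r θ) := by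
  have e : (fun θ : ℝ => f (cpt r θ)) = fun θ => ∑' m, hterm a (cpt r θ) m := by
    ext θ
    exact (hf _ (cpt_mem hr hr1 θ)).tsum_eq.symm
  rw [e]
  refine continuous_tsum (fun m => ?_) (summ_a hf hr hr1) (fun m θ => (norm_hterm_cpt a hr θ m).le)
  simp_rw [hterm_cpt]
  fun_prop

theorem bound_circ (hf : ∀ z ∈ unitDisc, HasSum (hterm a z) (f z)) {r : ℝ} (hr : 0 ≤ r)
    (hr1 : r < 1) (θ : ℝ) : ‖f (cpt r θ)‖ ≤ ∑' m : ℤ, ‖a m‖ * r ^ m.natAbs := by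
  rw [← (hf _ (cpt_mem hr hr1 θ)).tsum_eq]
  exact tsum_of_norm_bounded (summ_a hf hr hr1).hasSum (fun m => (norm_hterm_cpt a hr θ m).le)

theorem coef_circ (hf : ∀ z ∈ unitDisc, HasSum (hterm a z) (f z)) {r : ℝ} (hr : 0 ≤ r)
    (hr1 : r < 1) (n : ℕ) :
    ∫ θ in Ioo (-Real.pi) Real.pi, f (cpt r θ) * Complex.exp (-(n : ℂ) * θ * I) =
      2 * Real.pi * a n * (r : ℂ) ^ n := by
  have hn : ∀ θ : ℝ, ‖Complex.exp (-(n : ℂ) * θ * I)‖ = 1 := fun θ => by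
    have : (-(n : ℂ) * θ * I) = ((-n * θ : ℝ) : ℂ) * I := by push_cast; ring
    rw [this, Complex.norm_exp_ofReal_mul_I]
  have H := hasSum_integral_of_dominated_convergence
    (μ := volume.restrict (Ioo (-Real.pi) Real.pi))
    (F := fun (m : ℤ) (θ : ℝ) => hterm a (cpt r θ) m * Complex.exp (-(n : ℂ) * θ * I))
    (f := fun θ => f (cpt r θ) * Complex.exp (-(n : ℂ) * θ * I))
    (fun m _ => ‖a m‖ * r ^ m.natAbs)
    (fun m => by
      simp_rw [hterm_cpt]
      exact Continuous.aestronglyMeasurable (by fun_prop))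
    (fun m => Filter.Eventually.of_forall fun θ => by
      simp only [norm_mul, hn, mul_one, norm_hterm_cpt a hr]
      simp [norm_hterm_cpt a hr])
    (Filter.Eventually.of_forall fun θ => summ_a hf hr hr1)
    (by simp)
    (Filter.Eventually.of_forall fun θ => (hf _ (cpt_mem hr hr1 θ)).mul_right _)
  have e : ∀ m : ℤ, ∫ θ in Ioo (-Real.pi) Real.pi,
      hterm a (cpt r θ) m * Complex.exp (-(n : ℂ) * θ * I) =
      if m = n then 2 * Real.pi * a n * (r : ℂ) ^ n else 0 := by
    intro m
    have e1 : ∀ θ : ℝ, hterm a (cpt r θ) m * Complex.exp (-(n : ℂ) * θ * I) =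
        a m * (r : ℂ) ^ m.natAbs * Complex.exp (((m - n : ℤ) : ℂ) * θ * I) := by
      intro θ
      rw [hterm_cpt, mul_assoc, ← Complex.exp_add]
      push_cast
      ring_nf
    simp_rw [e1]
    rw [integral_const_mul, aux_orth]
    by_cases h : m = n
    · subst h
      simp
      ring
    · simp [h, sub_eq_zero]
  simp_rw [e] at H
  exact (H.unique (hasSum_ite_eq (n : ℤ) _))

end

section
variable {ω : ℝ → ℝ}

theorem mom_eq_s11 (n : ℕ) : mom ω (2 * (n : ℝ) + 1) = ∫ s in Ioo (0:ℝ) 1, s ^ (2 * n + 1) * ω s := by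
  unfold mom
  rw [intervalIntegral.integral_of_le zero_le_one, integral_Ioc_eq_integral_Ioo]
  congr 1
  ext s
  rw [← Real.rpow_natCast]
  push_cast
  rfl

theorem int_mom (hω : IsRadialWeight ω) (n : ℕ) :
    IntegrableOn (fun s => s ^ n * ω s) (Ioo (0:ℝ) 1) := by
  have h := hω.2.1.mono_set Ioo_subset_Ico_self
  refine Integrable.bdd_mul h (c := 1) (Continuous.aestronglyMeasurable (by fun_prop)) ?_
  refine (ae_restrict_iff' measurableSet_Ioo).2 (Filter.Eventually.of_forall fun s hs => ?_)
  rw [norm_pow, Real.norm_of_nonneg hs.1.le]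
  exact pow_le_one₀ hs.1.le hs.2.le

theorem mom_lower (hω : IsRadialWeight ω) {ρ : ℝ} (h0 : 0 < ρ) (h1 : ρ < 1) (n : ℕ) :
    ρ ^ (2 * n + 1) * tl ω ρ ≤ mom ω (2 * (n : ℝ) + 1) := by
  rw [mom_eq_s11]
  unfold tl
  rw [intervalIntegral.integral_of_le h1.le, integral_Ioc_eq_integral_Ioo, ← integral_const_mul]
  have hsub : Ioo ρ 1 ⊆ Ioo 0 1 := Ioo_subset_Ioo_left h0.le
  calc _ ≤ ∫ s in Ioo ρ 1, s ^ (2 * n + 1) * ω s := by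
        refine setIntegral_mono_on ?_ ((int_mom hω _).mono_set hsub) measurableSet_Ioo ?_
        · exact ((hω.2.1.mono_set Ioo_subset_Ico_self).mono_set hsub).const_mul _
        · intro s hs
          have := hω.1 s ⟨(h0.trans hs.1).le, hs.2⟩
          have := hs.1.le
          gcongr
    _ ≤ _ := by
        refine setIntegral_mono_set (int_mom hω _) ?_ hsub.eventuallyLE
        refine (ae_restrict_iff' measurableSet_Ioo).2 (Filter.Eventually.of_forall fun s hs => ?_)
        exact mul_nonneg (pow_nonneg hs.1.le _) (hω.1 s ⟨hs.1.le, hs.2⟩)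

theorem mom_pos (hω : IsRadialWeight ω) (n : ℕ) : 0 < mom ω (2 * (n : ℝ) + 1) := by
  refine lt_of_lt_of_le ?_ (mom_lower hω (ρ := 1/2) (by norm_num) (by norm_num) n)
  exact mul_pos (by positivity) (hω.2.2 _ (by norm_num))

theorem ker_summ (hω : IsRadialWeight ω) {q : ℝ} (h0 : 0 ≤ q) (h1 : q < 1) :
    Summable fun n : ℕ => q ^ n / (2 * mom ω (2 * (n : ℝ) + 1)) := by
  obtain ⟨ρ, hq, hρ1⟩ : ∃ ρ : ℝ, Real.sqrt q < ρ ∧ ρ < 1 :=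
    exists_between (by rw [Real.sqrt_lt' one_pos]; simpa using h1)
  have hρ0 : 0 < ρ := (Real.sqrt_nonneg q).trans_lt hq
  have hq2 : q < ρ ^ 2 := (Real.sqrt_lt' hρ0).1 hq
  have ht : 0 < tl ω ρ := hω.2.2 _ ⟨hρ0.le, hρ1⟩
  have hs : Summable fun n : ℕ => (q / ρ ^ 2) ^ n * (1 / (2 * (ρ * tl ω ρ))) :=
    (summable_geometric_of_lt_one (by positivity)
      ((div_lt_one (by positivity)).2 hq2)).mul_right _
  refine Summable.of_nonneg_of_le (fun n => ?_) (fun n => ?_) hs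
  · have := mom_pos hω n
    positivity
  · have h := mom_lower hω hρ0 hρ1 n
    calc q ^ n / (2 * mom ω (2 * (n : ℝ) + 1)) ≤ q ^ n / (2 * (ρ ^ (2 * n + 1) * tl ω ρ)) := by
          gcongr
      _ = _ := by
          rw [div_pow, ← pow_mul]
          field_simp
          try ring

end

theorem inner_int {ω : ℝ → ℝ} {f : ℂ → ℂ} {a : ℤ → ℂ} (hω : IsRadialWeight ω)
    (hf : ∀ z ∈ unitDisc, HasSum (hterm a z) (f z)) {r : ℝ} (hr : 0 ≤ r)
    (hr1 : r < 1) {z : ℂ} (hz : ‖z‖ < 1) :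
    HasSum (fun n : ℕ => (Real.pi * (a n * z ^ n) / (mom ω (2 * (n : ℝ) + 1) : ℂ) : ℂ) *
        (r : ℂ) ^ (2 * n))
      (∫ θ in Ioo (-Real.pi) Real.pi, f (cpt r θ) * starRingEnd ℂ (bKer ω z (cpt r θ))) := by
  set M := ∑' m : ℤ, ‖a m‖ * r ^ m.natAbs
  have hM0 : 0 ≤ M := tsum_nonneg fun m => by positivity
  have hq1 : ‖z‖ * r < 1 := by nlinarith [norm_nonneg z]
  have hks := ker_summ hω (q := ‖z‖ * r) (by positivity) hq1
  have hnorm : ∀ (n : ℕ) (θ : ℝ), ‖(starRingEnd ℂ z * cpt r θ) ^ n /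
      ((2 * mom ω (2 * (n : ℝ) + 1) : ℝ) : ℂ)‖ = (‖z‖ * r) ^ n / (2 * mom ω (2 * (n : ℝ) + 1)) := by
    intro n θ
    have := mom_pos hω n
    rw [norm_div, norm_pow, norm_mul, norm_cpt hr, Complex.norm_real,
      Real.norm_of_nonneg (by positivity)]
    simp
  have hker : ∀ θ, HasSum (fun n : ℕ => starRingEnd ℂ ((starRingEnd ℂ z * cpt r θ) ^ n /
      ((2 * mom ω (2 * (n : ℝ) + 1) : ℝ) : ℂ))) (starRingEnd ℂ (bKer ω z (cpt r θ))) := by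
    intro θ
    have : Summable (fun n : ℕ => (starRingEnd ℂ z * cpt r θ) ^ n /
      ((2 * mom ω (2 * (n : ℝ) + 1) : ℝ) : ℂ)) := by
      refine Summable.of_norm ?_
      simpa only [hnorm] using hks
    exact this.hasSum.map (starRingEnd ℂ) Complex.continuous_conj
  have H := hasSum_integral_of_dominated_convergence
    (μ := volume.restrict (Ioo (-Real.pi) Real.pi))
    (F := fun (n : ℕ) (θ : ℝ) => f (cpt r θ) * starRingEnd ℂ ((starRingEnd ℂ z * cpt r θ) ^ n /
      ((2 * mom ω (2 * (n : ℝ) + 1) : ℝ) : ℂ)))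
    (f := fun θ => f (cpt r θ) * starRingEnd ℂ (bKer ω z (cpt r θ)))
    (fun n _ => M * ((‖z‖ * r) ^ n / (2 * mom ω (2 * (n : ℝ) + 1))))
    (fun n => by
      have h1 := cont_circ hf hr hr1
      have h2 : Continuous fun θ : ℝ => cpt r θ := by unfold cpt; fun_prop
      refine Continuous.aestronglyMeasurable (h1.mul (Complex.continuous_conj.comp ?_))
      exact ((continuous_const.mul h2).pow n).div_const _)
    (fun n => Filter.Eventually.of_forall fun θ => by
      have := mom_pos hω n
      rw [norm_mul, RCLike.norm_conj, hnorm]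
      exact mul_le_mul_of_nonneg_right (bound_circ hf hr hr1 θ) (by positivity))
    (Filter.Eventually.of_forall fun θ => hks.mul_left _)
    (by simp)
    (Filter.Eventually.of_forall fun θ => (hker θ).mul_left _)
  refine Eq.mp (congrArg (fun u => HasSum u _) (funext fun n : ℕ => ?_)) H
  symm
  have hm : (mom ω (2 * (n : ℝ) + 1) : ℂ) ≠ 0 := by exact_mod_cast (mom_pos hω n).ne'
  have e1 : ∀ θ : ℝ, f (cpt r θ) * starRingEnd ℂ ((starRingEnd ℂ z * cpt r θ) ^ n /
      ((2 * mom ω (2 * (n : ℝ) + 1) : ℝ) : ℂ)) =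
      (z ^ n * r ^ n / (2 * mom ω (2 * (n : ℝ) + 1))) *
        (f (cpt r θ) * Complex.exp (-(n : ℂ) * θ * I)) := by
    intro θ
    have : Complex.exp (-(n : ℂ) * θ * I) = Complex.exp (-(θ * I)) ^ n := by
      rw [← Complex.exp_nat_mul]; ring_nf
    rw [this]
    simp only [cpt, map_div₀, map_pow, map_mul, Complex.conj_conj, Complex.conj_ofReal,
      ← Complex.exp_conj, Complex.conj_I, mul_neg, mul_pow]
    push_cast
    ring
  simp_rw [e1]
  rw [integral_const_mul, coef_circ hf hr hr1 n]
  field_simp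
  try ring

theorem polar_int {g : ℂ → ℂ} (hg : Integrable g) :
    IntegrableOn (fun p : ℝ × ℝ => p.1 • g (Complex.polarCoord.symm p)) polarCoord.target := by
  have hg' : Integrable (fun p : ℝ × ℝ => g (measurableEquivRealProd.symm p)) :=
    (volume_preserving_equiv_real_prod.symm.integrable_comp_emb
      measurableEquivRealProd.symm.measurableEmbedding).2 hg
  have := (integrableOn_image_iff_integrableOn_abs_det_fderiv_smul volume
    polarCoord.open_target.measurableSet
    (fun p _ => (hasFDerivAt_polarCoord_symm p).hasFDerivWithinAt)
    polarCoord.symm.injOn (fun p : ℝ × ℝ => g (measurableEquivRealProd.symm p))).1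
    hg'.integrableOn
  refine this.congr_fun (fun p hp => ?_) polarCoord.open_target.measurableSet
  simp only [det_fderivPolarCoordSymm]
  rw [abs_of_pos hp.1, measurableEquivRealProd_symm_polarCoord_symm_apply]

theorem polar_disc {g : ℂ → ℂ} (hg : IntegrableOn g unitDisc) :
    ∫ ζ in unitDisc, g ζ = ∫ r in Ioo (0:ℝ) 1, ∫ θ in Ioo (-Real.pi) Real.pi,
      (r : ℂ) * g (cpt r θ) := by
  have hm : MeasurableSet unitDisc := Metric.isOpen_ball.measurableSet
  have hcp : ∀ r θ : ℝ, Complex.polarCoord.symm (r, θ) = cpt r θ := by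
    intro r θ
    simp [cpt, Complex.exp_mul_I]
  have hi := polar_int (hg.integrable_indicator hm)
  rw [← integral_indicator hm, ← Complex.integral_comp_polarCoord_symm]
  have ht : polarCoord.target = Ioi (0:ℝ) ×ˢ Ioo (-Real.pi) Real.pi := rfl
  rw [ht] at hi ⊢
  rw [Measure.volume_eq_prod] at hi ⊢
  rw [setIntegral_prod _ hi]
  simp only [hcp]
  rw [setIntegral_eq_of_subset_of_forall_sdiff_eq_zero (s := Ioo (0:ℝ) 1) measurableSet_Ioi
    Ioo_subset_Ioi_self]
  · refine setIntegral_congr_fun measurableSet_Ioo fun r hr => ?_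
    congr 1
    ext θ
    rw [indicator_of_mem (cpt_mem hr.1.le hr.2 θ)]
    simp
  · intro r hr
    have h0 : 0 < r := hr.1
    have h1 : 1 ≤ r := by
      by_contra h
      exact hr.2 ⟨h0, not_le.1 h⟩
    have : ∀ θ, cpt r θ ∉ unitDisc := fun θ => by
      simp [unitDisc, norm_cpt h0.le, h1]
    simp [this]

theorem main_eq {ω : ℝ → ℝ} {f : ℂ → ℂ} {a : ℤ → ℂ} (hω : IsRadialWeight ω)
    (hf : ∀ z ∈ unitDisc, HasSum (hterm a z) (f z)) {z : ℂ} (hz : z ∈ unitDisc)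
    (hi : IntegrableOn (bInt ω f z) unitDisc) :
    bProj ω f z = ∑' n : ℕ, a (n : ℤ) * z ^ n := by
  have hz1 : ‖z‖ < 1 := by simpa [unitDisc] using hz
  set c : ℕ → ℂ := fun n => (Real.pi * (a n * z ^ n) / (mom ω (2 * (n : ℝ) + 1) : ℂ) : ℂ) with hc
  have hint : ∀ n : ℕ, Integrable (fun r : ℝ => c n * ((r ^ (2 * n + 1) * ω r : ℝ) : ℂ))
      (volume.restrict (Ioo (0:ℝ) 1)) := fun n => ((int_mom hω (2 * n + 1)).ofReal).const_mul _
  have hsum : Summable fun n : ℕ => ‖a n‖ * ‖z‖ ^ n := by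
    have := (summ_a hf (norm_nonneg z) hz1).comp_injective Nat.cast_injective
    simpa [Function.comp_def] using this
  have hnorm : ∀ n : ℕ, ∫ r in Ioo (0:ℝ) 1, ‖c n * ((r ^ (2 * n + 1) * ω r : ℝ) : ℂ)‖ =
      Real.pi * (‖a n‖ * ‖z‖ ^ n) := by
    intro n
    have hp := mom_pos hω n
    have : ∫ r in Ioo (0:ℝ) 1, ‖c n * ((r ^ (2 * n + 1) * ω r : ℝ) : ℂ)‖ =
        ∫ r in Ioo (0:ℝ) 1, ‖c n‖ * (r ^ (2 * n + 1) * ω r) := by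
      refine setIntegral_congr_fun measurableSet_Ioo fun r hr => ?_
      beta_reduce
      rw [norm_mul, Complex.norm_real, Real.norm_of_nonneg]
      exact mul_nonneg (pow_nonneg hr.1.le _) (hω.1 r ⟨hr.1.le, hr.2⟩)
    rw [this, integral_const_mul, ← mom_eq_s11]
    simp only [hc, norm_div, norm_mul, norm_pow, Complex.norm_real, Real.norm_of_nonneg hp.le,
      Real.norm_of_nonneg Real.pi_pos.le]
    field_simp
  have H := hasSum_integral_of_summable_integral_norm hint (by
    simp_rw [hnorm]
    exact hsum.mul_left _)
  have hval : ∀ n : ℕ, ∫ r in Ioo (0:ℝ) 1, c n * ((r ^ (2 * n + 1) * ω r : ℝ) : ℂ) =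
      Real.pi * (a n * z ^ n) := by
    intro n
    have hm : (mom ω (2 * (n : ℝ) + 1) : ℂ) ≠ 0 := by exact_mod_cast (mom_pos hω n).ne'
    rw [integral_const_mul, integral_complex_ofReal, ← mom_eq_s11]
    simp only [hc]
    field_simp
  simp_rw [hval] at H
  have key : ∫ ζ in unitDisc, bInt ω f z ζ =
      ∫ r in Ioo (0:ℝ) 1, ∑' n : ℕ, c n * ((r ^ (2 * n + 1) * ω r : ℝ) : ℂ) := by
    rw [polar_disc hi]
    refine setIntegral_congr_fun measurableSet_Ioo fun r hr => ?_
    have h := (inner_int hω hf hr.1.le hr.2 hz1).mul_left ((r : ℂ) * (ω r : ℂ))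
    have e : ∀ θ : ℝ, (r : ℂ) * bInt ω f z (cpt r θ) =
        (r : ℂ) * (ω r : ℂ) * (f (cpt r θ) * starRingEnd ℂ (bKer ω z (cpt r θ))) := by
      intro θ
      unfold bInt
      rw [norm_cpt hr.1.le]
      ring
    simp_rw [e]
    rw [integral_const_mul, ← h.tsum_eq]
    congr 1
    ext n
    simp only [hc]
    push_cast
    ring
  unfold bProj
  rw [key, ← H.tsum_eq, tsum_mul_left, ← mul_assoc, inv_mul_cancel₀ (by simp), one_mul]

/-- Proposition 3.1: if `P_ω : L^∞_ν̂ → H^∞_ν̂` is bounded, then for every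
harmonic `f ∈ L^∞_ν̂` with series representation
`f(z) = Σ_{m∈ℤ} a_m r^{|m|} e^{imθ}`, one has `P_ω f(z) = Σ_{n≥0} a_n z^n`,
i.e. `P_ω` restricted to harmonic functions is the Szegő projection; in
particular the Szegő projection is bounded from `h^∞_ν̂` to `H^∞_ν̂`. -/
theorem stmt11 (ω ν : ℝ → ℝ) (hω : IsRadialWeight ω) (hν : IsRadialWeight ν)
    (hb : ProjBddH ω (tl ν)) :
    ∃ C : ℝ, 0 < C ∧ ∀ (f : ℂ → ℂ) (a : ℤ → ℂ),
      AEStronglyMeasurable f (volume.restrict unitDisc) →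
      wSup (tl ν) f < ⊤ →
      (∀ z ∈ unitDisc, HasSum (fun m : ℤ =>
        a m * (if 0 ≤ m then z ^ m.toNat else (starRingEnd ℂ z) ^ (-m).toNat))
        (f z)) →
      (∀ z ∈ unitDisc, bProj ω f z = ∑' n : ℕ, a (n : ℤ) * z ^ n) ∧
      wSup (tl ν) (bProj ω f) ≤ ENNReal.ofReal C * wSup (tl ν) f := by
  obtain ⟨C, hC, h⟩ := hb
  refine ⟨C, hC, fun f a hm hfin hs => ?_⟩
  obtain ⟨h1, -, h3⟩ := h f hm hfin
  exact ⟨fun z hz => main_eq hω hs hz (h1 z hz), h3⟩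
end
end
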